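/- arXiv:2412.01574 — 7 statements merged into one kernel-verified Lean document; each statement's English description precedes it below -/
import Mathlib

section
/- Let μ be a compactly supported Borel probability measure on ℝ with moments m_k := ∫ λ^k dμ(λ), and let (Q_n)_{n≥0} and (q_n)_{n≥0} be defined from μ as in the context. Then for every integer k ≥ 1, m_k = Σ_{π ∈ NC(k)} ∏_{B ∈ π} q_{|B|}; that is, the numbers q_n = ∫ λ·Q_{n−1}(λ) dμ(λ) satisfy the moment–free-cumulant relations of μ, so they are the free cumulants of μ. -/
open MeasureTheory

/-- A finite partition of `{0,…,k-1}` (i.e. of `Fin k`) is non-crossing if there are no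
`a < b < c < d` with `a, c` in one block and `b, d` in a different block. -/
def IsNonCrossing {k : ℕ} (π : Finpartition (Finset.univ : Finset (Fin k))) : Prop :=
  ∀ a b c d : Fin k, a < b → b < c → c < d →
    ∀ B₁ ∈ π.parts, ∀ B₂ ∈ π.parts, a ∈ B₁ → c ∈ B₁ → b ∈ B₂ → d ∈ B₂ → B₁ = B₂

/-!
With `q 0 = 1` the recursion reads `x * Q n = ∑ i + j = n + 1, q i • Q j`. Think of `Q n` as `n`
open points, lying in no block: multiplication by `x` adds a new rightmost open point, and the
summand `q i • Q j` closes the last `i` open points into a block (none if `i = 0`). The blocks so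
obtained do not cross, since every point between two elements of a closed block is itself in a
block, and starting from `Q 0 = 1` each partial non-crossing partition arises exactly once. Hence
`x ^ k` is the sum of their weights times `Q j`, where `j` is the number of open points left. A
functional `φ` with `φ 1 = 1` and `q (n + 1) = φ (x * Q n)` kills `Q j` for `j ≥ 1`, so only full
partitions contribute to `φ (x ^ k)`.
-/

open Finset.HasAntidiagonal (antidiagonal mem_antidiagonal)

section UpperSubsets

variable {α : Type*} [LinearOrder α] {s B : Finset α} {a : α}

/-- The subsets of `s` that are upward closed relative to `s`, i.e. its final segments. -/
def upperSubsets (s : Finset α) : Finset (Finset α) :=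
  {B ∈ s.powerset | ∀ x ∈ B, ∀ y ∈ s, x < y → y ∈ B}

lemma mem_upperSubsets :
    B ∈ upperSubsets s ↔ B ⊆ s ∧ ∀ x ∈ B, ∀ y ∈ s, x < y → y ∈ B := by
  simp [upperSubsets]

lemma mem_of_mem_upperSubsets (hB : B ∈ upperSubsets s) (hne : B.Nonempty) (ha : a ∈ s)
    (hmax : ∀ x ∈ s, x ≤ a) : a ∈ B := by
  obtain ⟨x, hx⟩ := hne
  obtain ⟨hBs, hup⟩ := mem_upperSubsets.1 hB
  rcases (hmax x (hBs hx)).eq_or_lt with rfl | hxa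
  · exact hx
  · exact hup x hx a ha hxa

lemma upperSubsets_insert_of_forall_gt (ha : ∀ x ∈ s, a < x) :
    upperSubsets (insert a s) = insert (insert a s) (upperSubsets s) := by
  ext B
  simp only [Finset.mem_insert, mem_upperSubsets]
  constructor
  · rintro ⟨hBs, hup⟩
    by_cases haB : a ∈ B
    · refine .inl (hBs.antisymm (Finset.insert_subset haB fun y hy => ?_))
      exact hup a haB y (.inr hy) (ha y hy)
    · exact .inr ⟨(Finset.subset_insert_iff_of_notMem haB).1 hBs,
        fun x hx y hy => hup x hx y (.inr hy)⟩
  · rintro (rfl | ⟨hBs, hup⟩)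
    · exact ⟨Finset.Subset.rfl, fun _ _ y hy _ => Finset.mem_insert.2 hy⟩
    · refine ⟨hBs.trans (Finset.subset_insert a s), ?_⟩
      rintro x hx y (rfl | hy) hxy
      · exact absurd hxy (ha x (hBs hx)).not_gt
      · exact hup x hx y hy hxy

lemma sum_upperSubsets {M : Type*} [AddCommMonoid M] (s : Finset α) (f : ℕ → ℕ → M) :
    ∑ B ∈ upperSubsets s, f B.card (s \ B).card =
      ∑ p ∈ antidiagonal s.card, f p.1 p.2 := by
  induction s using Finset.induction_on_min generalizing f with
  | empty => simp [upperSubsets]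
  | insert a s ha ih =>
    have ha_notMem : a ∉ s := fun h => (ha a h).false
    have card_insert_sdiff (B) (hB : B ∈ upperSubsets s) :
        (insert a s \ B).card = (s \ B).card + 1 := by
      have haB : a ∉ B := fun h => ha_notMem ((mem_upperSubsets.1 hB).1 h)
      rw [Finset.insert_sdiff_of_notMem _ haB, Finset.card_insert_of_notMem (by simp [ha_notMem])]
    have hnew : insert a s ∉ upperSubsets s := fun h =>
      ha_notMem ((mem_upperSubsets.1 h).1 (Finset.mem_insert_self a s))
    rw [upperSubsets_insert_of_forall_gt ha, Finset.sum_insert hnew,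
      Finset.sum_congr rfl fun B hB => by rw [card_insert_sdiff B hB],
      ih fun i j => f i (j + 1), Finset.card_insert_of_notMem ha_notMem,
      Finset.Nat.sum_antidiagonal_succ']
    simp

end UpperSubsets

section PartialNonCrossing

variable {α : Type*} [LinearOrder α] {s B C : Finset α} {P : Finset (Finset α)} {a x : α}

/-- The points of `s` that lie in no block of `P`. -/
def openPoints (s : Finset α) (P : Finset (Finset α)) : Finset α :=
  {x ∈ s | ∀ B ∈ P, x ∉ B}

lemma mem_openPoints : x ∈ openPoints s P ↔ x ∈ s ∧ ∀ B ∈ P, x ∉ B := by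
  simp [openPoints]

lemma openPoints_insert (ha : ∀ B ∈ P, a ∉ B) :
    openPoints (insert a s) P = insert a (openPoints s P) := by
  simp only [openPoints, Finset.filter_insert, if_pos ha]

lemma openPoints_parts (π : Finpartition s) : openPoints s π.parts = ∅ := by
  refine Finset.eq_empty_of_forall_notMem fun x hx => ?_
  obtain ⟨hxs, hxopen⟩ := mem_openPoints.1 hx
  obtain ⟨B, hB, hxB⟩ := π.exists_mem hxs
  exact hxopen B hB hxB

/-- `P` is the set of blocks of a partial non-crossing partition of `s`: some points of `s` may be
open, but no open point lies between two points of a block. -/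
structure IsPartialNonCrossing (s : Finset α) (P : Finset (Finset α)) : Prop where
  empty_notMem : ∅ ∉ P
  subset : ∀ B ∈ P, B ⊆ s
  eq_of_mem : ∀ B ∈ P, ∀ C ∈ P, ∀ x, x ∈ B → x ∈ C → B = C
  eq_of_crossing : ∀ a b c d, a < b → b < c → c < d →
    ∀ B ∈ P, ∀ C ∈ P, a ∈ B → c ∈ B → b ∈ C → d ∈ C → B = C
  not_open_between : ∀ B ∈ P, ∀ x ∈ B, ∀ z ∈ B, ∀ y ∈ openPoints s P, x < y → ¬ y < z

/-- The result of adding the block `B` to `P`, where adding the empty block does nothing. -/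
def addBlock (B : Finset α) (P : Finset (Finset α)) : Finset (Finset α) :=
  (insert B P).erase ∅

/-- The block of `P` containing `a`, or `∅` if there is none. -/
def blockAt (a : α) (P : Finset (Finset α)) : Finset α :=
  {B ∈ P | a ∈ B}.sup id

lemma mem_addBlock : C ∈ addBlock B P ↔ C ≠ ∅ ∧ (C = B ∨ C ∈ P) := by
  simp [addBlock]

lemma mem_blockAt : x ∈ blockAt a P ↔ ∃ B ∈ P, a ∈ B ∧ x ∈ B := by
  simp [blockAt, Finset.mem_sup, and_assoc]

lemma prod_addBlock {R : Type*} [CommMonoid R] (hB : B ∉ P) {w : Finset α → R} (hw : w ∅ = 1) :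
    ∏ C ∈ addBlock B P, w C = w B * ∏ C ∈ P, w C := by
  rw [addBlock, Finset.prod_erase _ hw, Finset.prod_insert hB]

lemma openPoints_addBlock : openPoints s (addBlock B P) = openPoints s P \ B := by
  ext x
  simp only [mem_openPoints, mem_addBlock, Finset.mem_sdiff]
  grind

namespace IsPartialNonCrossing

lemma empty_right (s : Finset α) : IsPartialNonCrossing s ∅ := by
  constructor <;> simp

lemma eq_empty (hP : IsPartialNonCrossing ∅ P) : P = ∅ :=
  Finset.eq_empty_of_forall_notMem fun B hB =>
    hP.empty_notMem (Finset.subset_empty.1 (hP.subset B hB) ▸ hB)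

lemma notMem_of_forall_lt (hP : IsPartialNonCrossing s P) (ha : ∀ x ∈ s, x < a) :
    ∀ B ∈ P, a ∉ B :=
  fun B hB haB => (ha a (hP.subset B hB haB)).false

lemma blockAt_eq (hP : IsPartialNonCrossing s P) (hB : B ∈ P) (ha : a ∈ B) : blockAt a P = B := by
  ext x
  rw [mem_blockAt]
  constructor
  · rintro ⟨C, hC, haC, hx⟩
    exact hP.eq_of_mem C hC B hB a haC ha ▸ hx
  · exact fun hx => ⟨B, hB, ha, hx⟩

lemma insert_of_forall_lt (hP : IsPartialNonCrossing s P) (ha : ∀ x ∈ s, x < a) :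
    IsPartialNonCrossing (insert a s) P where
  empty_notMem := hP.empty_notMem
  subset B hB := (hP.subset B hB).trans (Finset.subset_insert a s)
  eq_of_mem := hP.eq_of_mem
  eq_of_crossing := hP.eq_of_crossing
  not_open_between B hB x hx z hz y hy hxy hyz := by
    rw [openPoints_insert (hP.notMem_of_forall_lt ha), Finset.mem_insert] at hy
    rcases hy with rfl | hy
    · exact hyz.not_gt (ha z (hP.subset B hB hz))
    · exact hP.not_open_between B hB x hx z hz y hy hxy hyz

lemma exists_mem_of_between (hP : IsPartialNonCrossing s P) (hB : B ∈ P) {x y z : α} (hx : x ∈ B)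
    (hz : z ∈ B) (hy : y ∈ s) (hxy : x < y) (hyz : y < z) : ∃ C ∈ P, y ∈ C := by
  by_contra! hopen
  exact hP.not_open_between B hB x hx z hz y (mem_openPoints.2 ⟨hy, hopen⟩) hxy hyz

protected lemma addBlock (hP : IsPartialNonCrossing s P) (hB : B ∈ upperSubsets (openPoints s P)) :
    IsPartialNonCrossing s (addBlock B P) := by
  obtain ⟨hBopen, hup⟩ := mem_upperSubsets.1 hB
  have hBs : B ⊆ s := hBopen.trans (Finset.filter_subset _ _)
  have disjoint_B : ∀ x ∈ B, ∀ C ∈ P, x ∉ C := fun x hx => (mem_openPoints.1 (hBopen hx)).2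
  refine ⟨by simp [mem_addBlock], fun C hC => ?_, fun C hC D hD x hxC hxD => ?_,
    fun a b c d hab hbc hcd C hC D hD ha hc hb hd => ?_, fun C hC x hx z hz y hy hxy hyz => ?_⟩
  · rcases (mem_addBlock.1 hC).2 with rfl | hC
    · exact hBs
    · exact hP.subset C hC
  · rcases (mem_addBlock.1 hC).2 with rfl | hCP <;> rcases (mem_addBlock.1 hD).2 with rfl | hDP
    · rfl
    · exact absurd hxD (disjoint_B x hxC D hDP)
    · exact absurd hxC (disjoint_B x hxD C hCP)
    · exact hP.eq_of_mem C hCP D hDP x hxC hxD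
  · rcases (mem_addBlock.1 hC).2 with rfl | hCP <;> rcases (mem_addBlock.1 hD).2 with rfl | hDP
    · rfl
    · exact absurd hcd (hP.not_open_between D hDP b hb d hd c (hBopen hc) hbc)
    · exact absurd hbc (hP.not_open_between C hCP a ha c hc b (hBopen hb) hab)
    · exact hP.eq_of_crossing a b c d hab hbc hcd C hCP D hDP ha hc hb hd
  · rw [openPoints_addBlock, Finset.mem_sdiff] at hy
    rcases (mem_addBlock.1 hC).2 with rfl | hCP
    · exact hy.2 (hup x hx y hy.1 hxy)
    · exact hP.not_open_between C hCP x hx z hz y hy.1 hxy hyz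

lemma last_mem_of_mem_upperSubsets (hP : IsPartialNonCrossing s P) (ha : ∀ x ∈ s, x < a)
    (hB : B ∈ upperSubsets (openPoints (insert a s) P)) (hne : B.Nonempty) : a ∈ B := by
  rw [openPoints_insert (hP.notMem_of_forall_lt ha)] at hB
  refine mem_of_mem_upperSubsets hB hne (Finset.mem_insert_self a _) fun x hx => ?_
  rcases Finset.mem_insert.1 hx with rfl | hx
  · exact le_rfl
  · exact (ha x (mem_openPoints.1 hx).1).le

lemma filter_notMem_addBlock (hP : IsPartialNonCrossing s P) (ha : ∀ x ∈ s, x < a)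
    (hB : B ∈ upperSubsets (openPoints (insert a s) P)) :
    {C ∈ addBlock B P | a ∉ C} = P := by
  have haP := hP.notMem_of_forall_lt ha
  ext C
  rw [Finset.mem_filter, mem_addBlock]
  constructor
  · rintro ⟨⟨hne, rfl | hC⟩, haC⟩
    · exact absurd (hP.last_mem_of_mem_upperSubsets ha hB (Finset.nonempty_iff_ne_empty.2 hne)) haC
    · exact hC
  · exact fun hC => ⟨⟨fun h => hP.empty_notMem (h ▸ hC), .inr hC⟩, haP C hC⟩

lemma blockAt_addBlock (hP : IsPartialNonCrossing s P) (ha : ∀ x ∈ s, x < a)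
    (hB : B ∈ upperSubsets (openPoints (insert a s) P)) :
    blockAt a (addBlock B P) = B := by
  have haP := hP.notMem_of_forall_lt ha
  ext x
  rw [mem_blockAt]
  constructor
  · rintro ⟨C, hC, haC, hx⟩
    rcases (mem_addBlock.1 hC).2 with rfl | hC
    · exact hx
    · exact absurd haC (haP C hC)
  · exact fun hx => ⟨B, mem_addBlock.2 ⟨Finset.ne_empty_of_mem hx, .inl rfl⟩,
      hP.last_mem_of_mem_upperSubsets ha hB ⟨x, hx⟩, hx⟩

lemma notMem_of_mem_upperSubsets (hP : IsPartialNonCrossing s P) (ha : ∀ x ∈ s, x < a)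
    (hB : B ∈ upperSubsets (openPoints (insert a s) P)) : B ∉ P := fun hBP =>
  have hne : B.Nonempty := Finset.nonempty_iff_ne_empty.2 fun h => hP.empty_notMem (h ▸ hBP)
  hP.notMem_of_forall_lt ha B hBP (hP.last_mem_of_mem_upperSubsets ha hB hne)

lemma filter_notMem (hP : IsPartialNonCrossing (insert a s) P) (ha : ∀ x ∈ s, x < a) :
    IsPartialNonCrossing s {C ∈ P | a ∉ C} := by
  have subset_s {C} (hC : C ∈ P) (haC : a ∉ C) : C ⊆ s :=
    (Finset.subset_insert_iff_of_notMem haC).1 (hP.subset C hC)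
  constructor
  · exact fun h => hP.empty_notMem (Finset.mem_filter.1 h).1
  · exact fun C hC => subset_s (Finset.mem_filter.1 hC).1 (Finset.mem_filter.1 hC).2
  · exact fun C hC D hD =>
      hP.eq_of_mem C (Finset.mem_filter.1 hC).1 D (Finset.mem_filter.1 hD).1
  · exact fun b c d e hbc hcd hde C hC D hD =>
      hP.eq_of_crossing b c d e hbc hcd hde C (Finset.mem_filter.1 hC).1
        D (Finset.mem_filter.1 hD).1
  · intro C hC x hx z hz y hy hxy hyz
    obtain ⟨hCP, haC⟩ := Finset.mem_filter.1 hC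
    obtain ⟨hys, hyopen⟩ := mem_openPoints.1 hy
    obtain ⟨D, hDP, hyD⟩ :=
      hP.exists_mem_of_between hCP hx hz (Finset.mem_insert_of_mem hys) hxy hyz
    by_cases haD : a ∈ D
    · -- The block `D` of `a` would cross `C`.
      have hza : z < a := ha z (subset_s hCP haC hz)
      exact haC (hP.eq_of_crossing x y z a hxy hyz hza C hCP D hDP hx hz hyD haD ▸ haD)
    · exact hyopen D (Finset.mem_filter.2 ⟨hDP, haD⟩) hyD

lemma blockAt_mem_upperSubsets (hP : IsPartialNonCrossing (insert a s) P) (ha : ∀ x ∈ s, x < a) :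
    blockAt a P ∈ upperSubsets (openPoints (insert a s) {C ∈ P | a ∉ C}) := by
  refine mem_upperSubsets.2 ⟨fun x hx => ?_, fun x hx y hy hxy => ?_⟩ <;>
    obtain ⟨B, hB, haB, hxB⟩ := mem_blockAt.1 hx
  · refine mem_openPoints.2 ⟨hP.subset B hB hxB, fun C hC hxC => ?_⟩
    obtain ⟨hCP, haC⟩ := Finset.mem_filter.1 hC
    exact haC (hP.eq_of_mem B hB C hCP x hxB hxC ▸ haB)
  · obtain ⟨hys, hyopen⟩ := mem_openPoints.1 hy
    rcases Finset.mem_insert.1 hys with rfl | hys'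
    · exact mem_blockAt.2 ⟨B, hB, haB, haB⟩
    · obtain ⟨C, hC, hyC⟩ := hP.exists_mem_of_between hB hxB haB hys hxy (ha y hys')
      have haC : a ∈ C := by
        by_contra haC
        exact hyopen C (Finset.mem_filter.2 ⟨hC, haC⟩) hyC
      exact mem_blockAt.2 ⟨C, hC, haC, hyC⟩

lemma addBlock_blockAt (hP : IsPartialNonCrossing s P) (a : α) :
    addBlock (blockAt a P) {C ∈ P | a ∉ C} = P := by
  ext C
  rw [mem_addBlock, Finset.mem_filter]
  constructor
  · rintro ⟨hne, rfl | hC⟩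
    · obtain ⟨x, hx⟩ := Finset.nonempty_iff_ne_empty.2 hne
      obtain ⟨B, hB, haB, -⟩ := mem_blockAt.1 hx
      exact (hP.blockAt_eq hB haB).symm ▸ hB
    · exact hC.1
  · refine fun hC => ⟨fun h => hP.empty_notMem (h ▸ hC), ?_⟩
    by_cases haC : a ∈ C
    · exact .inl (hP.blockAt_eq hC haC).symm
    · exact .inr ⟨hC, haC⟩

lemma exists_finpartition (hP : IsPartialNonCrossing s P) (hopen : openPoints s P = ∅) :
    ∃ π : Finpartition s, π.parts = P := by
  have pairwiseDisjoint : (P : Set (Finset α)).PairwiseDisjoint id := fun B hB C hC hne =>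
    Finset.disjoint_left.2 fun x hxB hxC => hne (hP.eq_of_mem B hB C hC x hxB hxC)
  have sup_eq : P.sup id = s := by
    refine (Finset.sup_le hP.subset).antisymm fun x hx => ?_
    by_contra hcov
    have : x ∈ openPoints s P := mem_openPoints.2 ⟨hx, by simpa [Finset.mem_sup] using hcov⟩
    simp [hopen] at this
  exact ⟨⟨P, Finset.supIndep_iff_pairwiseDisjoint.2 pairwiseDisjoint, sup_eq, hP.empty_notMem⟩, rfl⟩

end IsPartialNonCrossing

open scoped Classical in
/-- The finite set of all partial non-crossing partitions of `s`. -/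
noncomputable def partialNonCrossing (s : Finset α) : Finset (Finset (Finset α)) :=
  {P ∈ s.powerset.powerset | IsPartialNonCrossing s P}

lemma mem_partialNonCrossing : P ∈ partialNonCrossing s ↔ IsPartialNonCrossing s P := by
  simp only [partialNonCrossing, Finset.mem_filter, Finset.mem_powerset, and_iff_right_iff_imp]
  exact fun hP B hB => Finset.mem_powerset.2 (hP.subset B hB)

lemma partialNonCrossing_empty : partialNonCrossing (∅ : Finset α) = {∅} := by
  ext P
  rw [mem_partialNonCrossing, Finset.mem_singleton]
  exact ⟨fun hP => hP.eq_empty, fun h => h ▸ .empty_right ∅⟩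

lemma sum_partialNonCrossing_insert {M : Type*} [AddCommMonoid M] (ha : ∀ x ∈ s, x < a)
    (f : Finset (Finset α) → M) :
    ∑ P ∈ partialNonCrossing (insert a s), f P =
      ∑ P ∈ partialNonCrossing s, ∑ B ∈ upperSubsets (openPoints (insert a s) P),
        f (addBlock B P) := by
  rw [Finset.sum_sigma']
  refine Finset.sum_bij' (fun P _ => ⟨{C ∈ P | a ∉ C}, blockAt a P⟩) (fun X _ => addBlock X.2 X.1)
    ?_ ?_ ?_ ?_ ?_
  all_goals simp only [Finset.mem_sigma, mem_partialNonCrossing]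
  · exact fun P hP => ⟨hP.filter_notMem ha, hP.blockAt_mem_upperSubsets ha⟩
  · exact fun X hX => (hX.1.insert_of_forall_lt ha).addBlock hX.2
  · exact fun P hP => hP.addBlock_blockAt a
  · rintro ⟨P, B⟩ ⟨hP, hB⟩
    simp only [hP.filter_notMem_addBlock ha hB, hP.blockAt_addBlock ha hB]
  · exact fun P hP => by rw [hP.addBlock_blockAt a]

end PartialNonCrossing

section IsNonCrossing

variable {k : ℕ}

lemma isPartialNonCrossing_parts_iff (π : Finpartition (Finset.univ : Finset (Fin k))) :
    IsPartialNonCrossing Finset.univ π.parts ↔ IsNonCrossing π where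
  mp hπ := hπ.eq_of_crossing
  mpr hπ :=
    { empty_notMem := π.bot_notMem
      subset := fun B _ => B.subset_univ
      eq_of_mem := fun _ hB _ hC _ => π.eq_of_mem_parts hB hC
      eq_of_crossing := hπ
      not_open_between := by simp [openPoints_parts] }

lemma finsum_isNonCrossing {M : Type*} [AddCommMonoid M] (f : Finset (Finset (Fin k)) → M) :
    ∑ᶠ π ∈ {π : Finpartition (Finset.univ : Finset (Fin k)) | IsNonCrossing π}, f π.parts =
      ∑ P ∈ partialNonCrossing Finset.univ with openPoints Finset.univ P = ∅, f P := by
  rw [← finsum_mem_coe_finset]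
  refine finsum_mem_eq_of_bijOn Finpartition.parts ⟨fun π hπ => ?_, fun _ _ _ _ => Finpartition.ext,
    fun P hP => ?_⟩ fun _ _ => rfl
  · simpa [mem_partialNonCrossing, openPoints_parts, isPartialNonCrossing_parts_iff] using hπ
  · obtain ⟨hP, hopen⟩ : IsPartialNonCrossing Finset.univ P ∧ openPoints Finset.univ P = ∅ := by
      simpa [mem_partialNonCrossing] using hP
    obtain ⟨π, rfl⟩ := hP.exists_finpartition hopen
    exact ⟨π, (isPartialNonCrossing_parts_iff π).1 hP, rfl⟩

end IsNonCrossing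

section Recursion

variable {R A : Type*} {Q : ℕ → A} {q : ℕ → R} {x : A}

lemma mul_eq_sum_antidiagonal [CommRing R] [Ring A] [Algebra R A] (hq0 : q 0 = 1)
    (hQrec : ∀ n, 1 ≤ n → Q n = x * Q (n - 1) - ∑ i ∈ Finset.Icc 1 n, q i • Q (n - i)) (n : ℕ) :
    x * Q n = ∑ p ∈ antidiagonal (n + 1), q p.1 • Q p.2 := by
  have hrec : Q (n + 1) + ∑ i ∈ Finset.Icc 1 (n + 1), q i • Q (n + 1 - i) = x * Q n :=
    eq_sub_iff_add_eq.1 (hQrec (n + 1) n.succ_pos)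
  rw [← hrec, Finset.Nat.sum_antidiagonal_eq_sum_range_succ fun i j => q i • Q j,
    Finset.range_eq_Ico, Finset.sum_eq_sum_Ico_succ_bot (Nat.succ_pos _), hq0, one_smul]
  rfl

variable [CommSemiring R] [Semiring A] [Algebra R A]

lemma sum_upperSubsets_openPoints {α : Type*} [LinearOrder α] {s : Finset α} {a : α}
    {P : Finset (Finset α)} (hq0 : q 0 = 1)
    (hrec : ∀ n, x * Q n = ∑ p ∈ antidiagonal (n + 1), q p.1 • Q p.2)
    (ha : ∀ y ∈ s, y < a) (hP : IsPartialNonCrossing s P) :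
    ∑ B ∈ upperSubsets (openPoints (insert a s) P),
        (∏ C ∈ addBlock B P, q C.card) • Q (openPoints (insert a s) (addBlock B P)).card =
      x * (∏ C ∈ P, q C.card) • Q (openPoints s P).card := by
  have card_openPoints : (openPoints (insert a s) P).card = (openPoints s P).card + 1 := by
    rw [openPoints_insert (hP.notMem_of_forall_lt ha), Finset.card_insert_of_notMem]
    exact fun h => (ha a (mem_openPoints.1 h).1).false
  have summand (B) (hB : B ∈ upperSubsets (openPoints (insert a s) P)) :
      (∏ C ∈ addBlock B P, q C.card) • Q (openPoints (insert a s) (addBlock B P)).card =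
        (∏ C ∈ P, q C.card) • q B.card • Q (openPoints (insert a s) P \ B).card := by
    rw [prod_addBlock (hP.notMem_of_mem_upperSubsets ha hB) (w := fun C => q C.card) hq0,
      openPoints_addBlock, mul_comm, mul_smul]
  rw [Finset.sum_congr rfl summand, ← Finset.smul_sum,
    sum_upperSubsets _ fun i j => q i • Q j, card_openPoints, ← hrec, mul_smul_comm]

lemma pow_card_eq_sum_partialNonCrossing {α : Type*} [LinearOrder α] (hQ0 : Q 0 = 1)
    (hq0 : q 0 = 1)
    (hrec : ∀ n, x * Q n = ∑ p ∈ antidiagonal (n + 1), q p.1 • Q p.2)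
    (s : Finset α) :
    x ^ s.card =
      ∑ P ∈ partialNonCrossing s, (∏ B ∈ P, q B.card) • Q (openPoints s P).card := by
  induction s using Finset.induction_on_max with
  | empty => simp [partialNonCrossing_empty, openPoints, hQ0]
  | insert a s ha ih =>
    rw [Finset.card_insert_of_notMem fun h => (ha a h).false, pow_succ', ih, Finset.mul_sum,
      sum_partialNonCrossing_insert ha]
    exact Finset.sum_congr rfl fun P hP =>
      (sum_upperSubsets_openPoints hq0 hrec ha (mem_partialNonCrossing.1 hP)).symm

end Recursion

section Functional

variable {R A : Type*} [CommRing R] [Ring A] [Algebra R A] (φ : A →ₗ[R] R) {Q : ℕ → A} {q : ℕ → R}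
  {x : A}

lemma map_succ_eq_zero_of_recursion (hφ : φ 1 = 1) (hQ0 : Q 0 = 1) (hq0 : q 0 = 1)
    (hq : ∀ n, q (n + 1) = φ (x * Q n))
    (hrec : ∀ n, x * Q n = ∑ p ∈ antidiagonal (n + 1), q p.1 • Q p.2) (n : ℕ) :
    φ (Q (n + 1)) = 0 := by
  induction n using Nat.strong_induction_on with
  | _ n ih =>
    have tail_eq : ∑ p ∈ antidiagonal n, q (p.1 + 1) * φ (Q p.2) = q (n + 1) := by
      rw [Finset.sum_eq_single_of_mem (n, 0) (by simp)]
      · simp [hQ0, hφ]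
      · rintro ⟨i, _ | j⟩ hij hne
        · simp_all
        · rw [ih j (by have := mem_antidiagonal.1 hij; omega), mul_zero]
    have expand : q (n + 1) = φ (Q (n + 1)) + q (n + 1) := by
      conv_lhs => rw [hq, hrec, map_sum, Finset.Nat.sum_antidiagonal_succ]
      simp only [map_smul, smul_eq_mul, hq0, one_mul, tail_eq]
    exact right_eq_add.1 expand

theorem stmt0_general (hφ : φ 1 = 1) (hQ0 : Q 0 = 1) (hq0 : q 0 = 1)
    (hq : ∀ n, 1 ≤ n → q n = φ (x * Q (n - 1)))
    (hQrec : ∀ n, 1 ≤ n → Q n = x * Q (n - 1) - ∑ i ∈ Finset.Icc 1 n, q i • Q (n - i)) (k : ℕ) :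
    φ (x ^ k) =
      ∑ᶠ π ∈ {π : Finpartition (Finset.univ : Finset (Fin k)) | IsNonCrossing π},
        ∏ B ∈ π.parts, q B.card := by
  have hrec := mul_eq_sum_antidiagonal hq0 hQrec
  have map_eq_ite (U : Finset (Fin k)) : φ (Q U.card) = if U = ∅ then 1 else 0 := by
    split_ifs with hU
    · rw [hU, Finset.card_empty, hQ0, hφ]
    · obtain ⟨n, hn⟩ := Nat.exists_eq_succ_of_ne_zero (Finset.card_ne_zero.2
        (Finset.nonempty_iff_ne_empty.2 hU))
      exact hn ▸ map_succ_eq_zero_of_recursion φ hφ hQ0 hq0 (fun n => hq (n + 1) n.succ_pos) hrec n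
  have hpow := pow_card_eq_sum_partialNonCrossing hQ0 hq0 hrec (Finset.univ : Finset (Fin k))
  rw [Finset.card_fin] at hpow
  rw [finsum_isNonCrossing fun P => ∏ B ∈ P, q B.card, hpow, map_sum, Finset.sum_filter]
  simp only [map_smul, map_eq_ite, smul_eq_mul, mul_ite, mul_one, mul_zero]

end Functional

/-- Integration against `μ` as a linear functional on polynomials. -/
noncomputable def polynomialIntegral (μ : Measure ℝ)
    (hμ : ∀ p : Polynomial ℝ, Integrable (fun x => p.eval x) μ) : Polynomial ℝ →ₗ[ℝ] ℝ where
  toFun p := ∫ x, p.eval x ∂μ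
  map_add' p r := by simpa only [Polynomial.eval_add] using integral_add (hμ p) (hμ r)
  map_smul' c p := by
    simpa only [Polynomial.eval_smul, smul_eq_mul, RingHom.id_apply] using
      integral_const_mul c fun x => p.eval x

lemma integrable_of_continuous_of_isCompact {X E : Type*} [TopologicalSpace X] [T2Space X]
    [MeasurableSpace X] [OpensMeasurableSpace X] [NormedAddCommGroup E] {μ : Measure X}
    [IsFiniteMeasureOnCompacts μ] {f : X → E} (hf : Continuous f) {K : Set X} (hK : IsCompact K)
    (hKc : μ Kᶜ = 0) : Integrable f μ := by
  have hfK : IntegrableOn f K μ := hf.continuousOn.integrableOn_compact hK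
  rwa [IntegrableOn, Measure.restrict_eq_self_of_ae_mem hKc] at hfK

theorem stmt0 (μ : Measure ℝ) [IsProbabilityMeasure μ]
    (K : Set ℝ) (hK : IsCompact K) (hKc : μ Kᶜ = 0)
    (Q : ℕ → Polynomial ℝ) (q : ℕ → ℝ)
    (hQ0 : Q 0 = 1) (hq0 : q 0 = 1)
    (hq : ∀ n : ℕ, 1 ≤ n → q n = ∫ x, x * (Q (n - 1)).eval x ∂μ)
    (hQrec : ∀ n : ℕ, 1 ≤ n →
      Q n = Polynomial.X * Q (n - 1) - ∑ i ∈ Finset.Icc 1 n, Polynomial.C (q i) * Q (n - i)) :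
    ∀ k : ℕ, 1 ≤ k →
      (∫ x, x ^ k ∂μ) =
        ∑ᶠ π ∈ {π : Finpartition (Finset.univ : Finset (Fin k)) | IsNonCrossing π},
          ∏ B ∈ π.parts, q B.card := by
  intro k _
  simp only [← Polynomial.smul_eq_C_mul] at hQrec
  simpa [polynomialIntegral] using
    stmt0_general (polynomialIntegral μ fun p =>
        integrable_of_continuous_of_isCompact p.continuous hK hKc)
      (by simp [polynomialIntegral]) hQ0 hq0 (by simpa [polynomialIntegral] using hq) hQrec k
end

section
/- Let (q_n)_{n≥0} be any sequence of real numbers with q_0 = 1. Then for every integer ℓ ≥ 1, Σ_{π ∈ NC(ℓ)} ∏_{B ∈ π} q_{|B|} = Σ_{(s_1,…,s_ℓ) ∈ S(ℓ)} ∏_{i=1}^{ℓ} q_{s_i}. -/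
/-- `S(ℓ)`: tuples `(s_1,…,s_ℓ)` of nonnegative integers whose partial sums satisfy
`s_1 + ⋯ + s_m ≤ m` for every `m ∈ {1,…,ℓ}` and with `s_1 + ⋯ + s_ℓ = ℓ`
(here indexed by `Fin ℓ`, zero-based). -/
def Sset (ℓ : ℕ) : Set (Fin ℓ → ℕ) :=
  {s | (∀ m : Fin ℓ, ∑ j ∈ Finset.univ.filter (fun j => j ≤ m), s j ≤ (m : ℕ) + 1) ∧
        ∑ j, s j = ℓ}

/-! Both sums are indexed by the maps `g` on `Fin ℓ` that send every point to the maximum of its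
block. The non-crossing partitions correspond to such maps through their fibres, and the tuples in
`S(ℓ)` are exactly their fibre sizes `s i = #{x | g x = i}`; empty fibres contribute the factor
`q 0 = 1`. The map is recovered from `s` by means of the lattice path whose height after `m` steps
is `m - (s 0 + ⋯ + s (m - 1))`. This height counts the points `x < m` with `m ≤ g x`, so that
`g j` is the first step from `j` on after which the path is no higher than it was before step `j`.
-/

namespace NonCrossing

open Finset

/-- The maps sending each point to the maximum of its block, for some non-crossing partition: any
two of the intervals `[x, g x]` are nested or disjoint. -/
structure IsNestedMap {α : Type*} [Preorder α] (g : α → α) : Prop where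
  le_apply (x : α) : x ≤ g x
  apply_le_apply ⦃x y : α⦄ : x ≤ y → y ≤ g x → g y ≤ g x

theorem IsNestedMap.apply_apply {α : Type*} [PartialOrder α] {g : α → α} (hg : IsNestedMap g)
    (x : α) : g (g x) = g x :=
  (hg.apply_le_apply (hg.le_apply x) le_rfl).antisymm (hg.le_apply (g x))

section Finpartition

variable {α : Type*} [DecidableEq α] {s : Finset α}

theorem image_part_eq_parts (π : Finpartition s) : s.image π.part = π.parts :=
  Subset.antisymm (image_subset_iff.2 fun _ hx ↦ π.part_mem.2 hx)
    (fun B hB ↦ by simpa using π.part_surjOn hB)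

theorem ext_part {π ρ : Finpartition s} (h : ∀ x ∈ s, π.part x = ρ.part x) : π = ρ :=
  Finpartition.ext <| by
    rw [← image_part_eq_parts, ← image_part_eq_parts, image_congr h]

end Finpartition

section KerPartition

variable {α β : Type*} [Fintype α] [DecidableEq α] [DecidableEq β]

/-- The partition of a finite type into the nonempty fibres of a map. -/
def kerPartition (g : α → β) : Finpartition (univ : Finset α) :=
  Finpartition.ofSetoid (Setoid.ker g)

theorem mem_part_kerPartition {g : α → β} {x y : α} :
    y ∈ (kerPartition g).part x ↔ g y = g x := by
  rw [kerPartition, Finpartition.mem_part_ofSetoid_iff_rel, Setoid.ker_def, eq_comm]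

theorem parts_kerPartition (g : α → β) :
    (kerPartition g).parts = (univ.image g).image fun i ↦ univ.filter (g · = i) := by
  rw [← image_part_eq_parts, image_image]
  exact image_congr fun x _ ↦ by ext y; simp [mem_part_kerPartition]

theorem prod_parts_kerPartition [Fintype β] {M : Type*} [CommMonoid M] (f : Finset α → M)
    (hf : f ∅ = 1) (g : α → β) :
    ∏ B ∈ (kerPartition g).parts, f B = ∏ i, f {x | g x = i} := by
  have fiber_injOn : Set.InjOn (fun i ↦ ({x | g x = i} : Finset α)) (univ.image g) := by
    intro i hi j _ hij
    obtain ⟨x, -, rfl⟩ := mem_image.1 hi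
    simpa using Finset.ext_iff.1 hij x
  rw [parts_kerPartition, prod_image fiber_injOn]
  refine prod_subset (subset_univ _) fun i _ hi ↦ ?_
  have fiber_eq_empty : ({x | g x = i} : Finset α) = ∅ :=
    filter_eq_empty_iff.2 fun x _ hx ↦ hi (mem_image.2 ⟨x, mem_univ x, hx⟩)
  rw [fiber_eq_empty, hf]

end KerPartition

section FiberCard

variable {α β : Type*} [Fintype α] [DecidableEq β]

/-- The number of points in the fibre of `g` over `i`. -/
def fiberCard (g : α → β) (i : β) : ℕ :=
  #{x | g x = i}

theorem sum_fiberCard (g : α → β) (t : Finset β) : ∑ i ∈ t, fiberCard g i = #{x | g x ∈ t} :=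
  sum_card_fiberwise_eq_card_filter univ t g

end FiberCard

section BlockMax

variable {α : Type*} [Fintype α] [LinearOrder α] (π : Finpartition (univ : Finset α)) {x y : α}

/-- The maximum of the block of `π` containing `x`. -/
def blockMax (x : α) : α :=
  (π.part x).max' ⟨x, π.mem_part (mem_univ x)⟩

theorem blockMax_mem_part (x : α) : blockMax π x ∈ π.part x :=
  max'_mem _ _

variable {π} in
theorem le_blockMax (hy : y ∈ π.part x) : y ≤ blockMax π x :=
  le_max' _ _ hy

theorem part_blockMax (x : α) : π.part (blockMax π x) = π.part x :=
  π.part_eq_of_mem (π.part_mem.2 (mem_univ x)) (blockMax_mem_part π x)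

variable {π} in
theorem blockMax_eq_blockMax_iff : blockMax π x = blockMax π y ↔ π.part x = π.part y := by
  refine ⟨fun h ↦ ?_, fun h ↦ by simp only [blockMax, h]⟩
  rw [← part_blockMax, h, part_blockMax]

theorem kerPartition_blockMax : kerPartition (blockMax π) = π := by
  refine ext_part fun x _ ↦ ?_
  ext y
  rw [mem_part_kerPartition, blockMax_eq_blockMax_iff,
    π.mem_part_iff_part_eq_part (mem_univ y) (mem_univ x)]

theorem blockMax_kerPartition {g : α → α} (hg : IsNestedMap g) :
    blockMax (kerPartition g) = g := by
  funext x
  apply le_antisymm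
  · calc
      blockMax (kerPartition g) x ≤ g (blockMax (kerPartition g) x) := hg.le_apply _
      _ = g x := mem_part_kerPartition.1 (blockMax_mem_part _ x)
  · exact le_blockMax (mem_part_kerPartition.2 (hg.apply_apply x))

end BlockMax

section Fin

variable {n : ℕ}

theorem isNonCrossing_iff_part {π : Finpartition (univ : Finset (Fin n))} :
    IsNonCrossing π ↔ ∀ a b c d, a < b → b < c → c < d → c ∈ π.part a → d ∈ π.part b →
      π.part a = π.part b := by
  constructor
  · intro hπ a b c d hab hbc hcd hc hd
    exact hπ a b c d hab hbc hcd _ (π.part_mem.2 (mem_univ a)) _ (π.part_mem.2 (mem_univ b))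
      (π.mem_part (mem_univ a)) hc (π.mem_part (mem_univ b)) hd
  · intro hπ a b c d hab hbc hcd B₁ hB₁ B₂ hB₂ ha hc hb hd
    rw [← π.part_eq_of_mem hB₁ ha] at hc ⊢
    rw [← π.part_eq_of_mem hB₂ hb] at hd ⊢
    exact hπ a b c d hab hbc hcd hc hd

theorem isNestedMap_blockMax {π : Finpartition (univ : Finset (Fin n))} (hπ : IsNonCrossing π) :
    IsNestedMap (blockMax π) where
  le_apply x := le_blockMax (π.mem_part (mem_univ x))
  apply_le_apply x y hxy hy := by
    rcases hxy.eq_or_lt with rfl | hxy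
    · exact le_rfl
    rcases hy.eq_or_lt with hy | hy
    · exact (blockMax_eq_blockMax_iff.2 (hy ▸ part_blockMax π x)).le
    by_contra! hlt
    have part_eq : π.part x = π.part y :=
      isNonCrossing_iff_part.1 hπ x y _ _ hxy hy hlt (blockMax_mem_part π x) (blockMax_mem_part π y)
    exact hlt.ne (blockMax_eq_blockMax_iff.2 part_eq)

theorem IsNestedMap.isNonCrossing_kerPartition {g : Fin n → Fin n} (hg : IsNestedMap g) :
    IsNonCrossing (kerPartition g) := by
  refine isNonCrossing_iff_part.2 fun a b c d hab hbc hcd hc hd ↦ ?_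
  rw [mem_part_kerPartition] at hc hd
  have hba : g b ≤ g a := hg.apply_le_apply hab.le (hbc.le.trans (hc ▸ hg.le_apply c))
  have hcb : g c ≤ g b := hg.apply_le_apply hbc.le (hcd.le.trans (hd ▸ hg.le_apply d))
  have hgab : g a = g b := (hc ▸ hcb).antisymm hba
  ext x
  rw [mem_part_kerPartition, mem_part_kerPartition, hgab]

theorem bijOn_kerPartition :
    Set.BijOn kerPartition {g : Fin n → Fin n | IsNestedMap g} {π | IsNonCrossing π} :=
  Set.InvOn.bijOn (f' := blockMax)
    ⟨fun _ hg ↦ blockMax_kerPartition hg, fun π _ ↦ kerPartition_blockMax π⟩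
    (fun _ hg ↦ hg.isNonCrossing_kerPartition) (fun _ hπ ↦ isNestedMap_blockMax hπ)

/-- The height after `m` steps of the lattice path whose `j`-th step is `1 - s j`. Only values
`m ≤ n` are meaningful. -/
def height (s : Fin n → ℕ) (m : ℕ) : ℤ :=
  m - ∑ j with j.val < m, (s j : ℤ)

theorem height_zero (s : Fin n → ℕ) : height s 0 = 0 := by
  simp [height]

theorem height_succ (s : Fin n → ℕ) (i : Fin n) :
    height s (i + 1) = height s i + 1 - s i := by
  have insert_eq : ({j : Fin n | j.val < i + 1} : Finset (Fin n)) =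
      insert i ({j : Fin n | j.val < i} : Finset (Fin n)) := by
    ext j
    simp only [mem_filter_univ, mem_insert, Fin.ext_iff]
    omega
  rw [height, height, insert_eq, sum_insert (by simp)]
  push_cast
  ring

theorem mem_Sset_iff_height {s : Fin n → ℕ} :
    s ∈ Sset n ↔ (∀ m ≤ n, 0 ≤ height s m) ∧ height s n = 0 := by
  have partial_sum_le (m : Fin n) :
      ∑ j ∈ univ.filter (fun j ↦ j ≤ m), s j ≤ (m : ℕ) + 1 ↔ 0 ≤ height s (m + 1) := by
    simp only [height, sub_nonneg, Order.lt_add_one_iff, Fin.val_fin_le]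
    norm_cast
  have total_sum_eq : ∑ j, s j = n ↔ height s n = 0 := by
    simp only [height, Fin.is_lt, filter_true, sub_eq_zero]
    norm_cast
    exact eq_comm
  simp only [Sset, Set.mem_ofPred_eq, partial_sum_le, total_sum_eq]
  refine and_congr_left fun _ ↦ ⟨fun h m hm ↦ ?_, fun h m ↦ h (m + 1) m.isLt⟩
  cases m with
  | zero => exact (height_zero s).ge
  | succ k => exact h ⟨k, hm⟩

/-- The steps `i ≥ j` after which the path of `s` is no higher than it was before step `j`. -/
def returnSet (s : Fin n → ℕ) (j : Fin n) : Set (Fin n) :=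
  {i | j ≤ i ∧ height s (i + 1) ≤ height s j}

theorem height_fiberCard {g : Fin n → Fin n} (hg : ∀ x, x ≤ g x) {m : ℕ} (hm : m ≤ n) :
    height (fiberCard g) m = #{x | x.val < m ∧ m ≤ (g x).val} := by
  have card_split : #{x | (g x).val < m} + #{x | x.val < m ∧ m ≤ (g x).val} = m := by
    rw [← card_union_of_disjoint (disjoint_filter.2 fun _ _ _ _ ↦ by omega), ← filter_or]
    calc #{x | (g x).val < m ∨ x.val < m ∧ m ≤ (g x).val}
      _ = #{x : Fin n | x.val < m} := by
        congr 1
        ext x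
        have hx : x ≤ g x := hg x
        simp only [mem_filter_univ]
        omega
      _ = m := by rw [Fin.card_filter_val_lt, min_eq_right hm]
  simp only [height, ← Nat.cast_sum, sum_fiberCard, mem_filter_univ]
  omega

theorem fiberCard_mem_Sset {g : Fin n → Fin n} (hg : ∀ x, x ≤ g x) : fiberCard g ∈ Sset n := by
  refine mem_Sset_iff_height.2 ⟨fun m hm ↦ ?_, ?_⟩
  · rw [height_fiberCard hg hm]
    positivity
  · simp [height_fiberCard hg le_rfl]

theorem IsNestedMap.height_fiberCard_apply_add_one_le {g : Fin n → Fin n} (hg : IsNestedMap g)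
    (j : Fin n) : height (fiberCard g) (g j + 1) ≤ height (fiberCard g) j := by
  rw [height_fiberCard hg.le_apply (g j).isLt, height_fiberCard hg.le_apply j.isLt.le,
    Nat.cast_le]
  refine card_le_card fun x hx ↦ ?_
  simp only [mem_filter_univ] at hx ⊢
  have hxj : x < j := by
    by_contra! hjx
    have hle : g x ≤ g j := hg.apply_le_apply hjx (by omega)
    omega
  have hj : j ≤ g j := hg.le_apply j
  omega

theorem IsNestedMap.height_fiberCard_lt {g : Fin n → Fin n} (hg : IsNestedMap g)
    {j i : Fin n} (hji : j ≤ i) (hi : i < g j) :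
    height (fiberCard g) j < height (fiberCard g) (i + 1) := by
  rw [height_fiberCard hg.le_apply j.isLt.le, height_fiberCard hg.le_apply i.isLt, Nat.cast_lt]
  refine card_lt_card (ssubset_iff_of_subset (fun x hx ↦ ?_) |>.2 ⟨j, ?_, ?_⟩)
  · simp only [mem_filter_univ] at hx ⊢
    have hle : g j ≤ g x := hg.apply_le_apply (by omega) (by omega)
    omega
  · simp only [mem_filter_univ]
    omega
  · simp

theorem IsNestedMap.isLeast_returnSet {g : Fin n → Fin n} (hg : IsNestedMap g) (j : Fin n) :
    IsLeast (returnSet (fiberCard g) j) (g j) := by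
  refine ⟨⟨hg.le_apply j, hg.height_fiberCard_apply_add_one_le j⟩, fun i hi ↦ ?_⟩
  by_contra! hlt
  exact (hg.height_fiberCard_lt hi.1 hlt).not_ge hi.2

theorem exists_isLeast_returnSet {s : Fin n → ℕ} (hs : s ∈ Sset n) (j : Fin n) :
    ∃ i, IsLeast (returnSet s j) i := by
  obtain ⟨height_nonneg, height_last⟩ := mem_Sset_iff_height.1 hs
  have : NeZero n := ⟨j.pos.ne'⟩
  have top_mem : ⊤ ∈ returnSet s j := by
    refine ⟨le_top, ?_⟩
    rw [Fin.val_top, Nat.sub_add_cancel j.pos, height_last]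
    exact height_nonneg j j.isLt.le
  exact ⟨_, isLeast_csInf ⟨_, top_mem⟩⟩

section FirstReturn

variable {s : Fin n → ℕ} {g : Fin n → Fin n}

theorem height_lt_height_of_isLeast (hg : ∀ j, IsLeast (returnSet s j) (g j))
    {x y : Fin n} (hxy : x < y) (hy : y ≤ g x) : height s x < height s y := by
  obtain ⟨k, hk⟩ : ∃ k, y.val = k + 1 := Nat.exists_eq_add_one.2 (by omega)
  by_contra! hle
  have hxk : x.val ≤ k := by omega
  have hmem : ⟨k, by omega⟩ ∈ returnSet s x := ⟨hxk, hk ▸ hle⟩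
  have hgx : (g x).val ≤ k := (hg x).2 hmem
  omega

theorem height_le_height_of_isLeast (hg : ∀ j, IsLeast (returnSet s j) (g j))
    {x y : Fin n} (hxy : x ≤ y) (hy : y ≤ g x) : height s x ≤ height s y := by
  rcases hxy.eq_or_lt with rfl | hlt
  · exact le_rfl
  · exact (height_lt_height_of_isLeast hg hlt hy).le

theorem isNestedMap_of_isLeast (hg : ∀ j, IsLeast (returnSet s j) (g j)) :
    IsNestedMap g where
  le_apply j := (hg j).1.1
  apply_le_apply x _ hxy hy :=
    (hg _).2 ⟨hy, (hg x).1.2.trans (height_le_height_of_isLeast hg hxy hy)⟩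

/-- The heights at the points of the fibre over `i` are distinct and lie between the heights after
and before step `i`, an interval of `s i` integers. -/
theorem fiberCard_le_of_isLeast (hg : ∀ j, IsLeast (returnSet s j) (g j)) (i : Fin n) :
    fiberCard g i ≤ s i := by
  have le_apply (j : Fin n) : j ≤ g j := (hg j).1.1
  have card_Icc : #(Icc (height s (i + 1)) (height s i)) = s i := by
    rw [Int.card_Icc, height_succ]
    omega
  rw [← card_Icc]
  refine card_le_card_of_injOn (fun x : Fin n ↦ height s x) (fun x hx ↦ ?_) ?_
  · obtain rfl : g x = i := by simpa using hx
    exact mem_coe.2 (mem_Icc.2 ⟨(hg x).1.2, height_le_height_of_isLeast hg (le_apply x) le_rfl⟩)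
  · refine StrictMonoOn.injOn fun x hx y hy hxy ↦ height_lt_height_of_isLeast hg hxy ?_
    have hgxy : g x = g y := by simp_all
    exact hgxy ▸ le_apply y

theorem fiberCard_eq_of_isLeast (hg : ∀ j, IsLeast (returnSet s j) (g j))
    (hs : ∑ j, s j = n) : fiberCard g = s := by
  have sum_eq : ∑ i, fiberCard g i = ∑ i, s i := by
    simpa [hs] using sum_fiberCard g univ
  funext i
  exact (sum_eq_sum_iff_of_le fun i _ ↦ fiberCard_le_of_isLeast hg i).1 sum_eq i (mem_univ i)

end FirstReturn

theorem bijOn_fiberCard :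
    Set.BijOn fiberCard {g : Fin n → Fin n | IsNestedMap g} (Sset n) := by
  refine ⟨fun g hg ↦ fiberCard_mem_Sset hg.le_apply, fun g hg g' hg' h ↦ ?_, fun s hs ↦ ?_⟩
  · funext j
    exact (hg.isLeast_returnSet j).unique (h ▸ hg'.isLeast_returnSet j)
  · choose g hg using exists_isLeast_returnSet hs
    exact ⟨g, isNestedMap_of_isLeast hg, fiberCard_eq_of_isLeast hg hs.2⟩

end Fin

end NonCrossing

theorem stmt1_general {R : Type*} [CommSemiring R] (q : ℕ → R) (hq0 : q 0 = 1) (ℓ : ℕ) :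
    (∑ᶠ π ∈ {π : Finpartition (Finset.univ : Finset (Fin ℓ)) | IsNonCrossing π},
        ∏ B ∈ π.parts, q B.card) =
      ∑ᶠ s ∈ Sset ℓ, ∏ i, q (s i) := by
  rw [← finsum_mem_eq_of_bijOn _ NonCrossing.bijOn_kerPartition fun _ _ ↦ rfl]
  exact finsum_mem_eq_of_bijOn _ NonCrossing.bijOn_fiberCard fun g _ ↦
    NonCrossing.prod_parts_kerPartition (fun B ↦ q B.card) hq0 g

theorem stmt1 (q : ℕ → ℝ) (hq0 : q 0 = 1) :
    ∀ ℓ : ℕ, 1 ≤ ℓ →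
      (∑ᶠ π ∈ {π : Finpartition (Finset.univ : Finset (Fin ℓ)) | IsNonCrossing π},
          ∏ B ∈ π.parts, q B.card) =
        ∑ᶠ s ∈ Sset ℓ, ∏ i, q (s i) := by
  intro ℓ _
  exact stmt1_general q hq0 ℓ
end

section
/- Let μ be a compactly supported Borel probability measure on ℝ and let (Q_n)_{n≥0}, (q_n)_{n≥0} be defined from μ as in the context. Then for all integers ℓ ≥ 1 and n ≥ 0, ∫ λ^ℓ·Q_n(λ) dμ(λ) = Σ_{(s_1,…,s_ℓ) ∈ S(ℓ,n)} ∏_{j=1}^{ℓ} q_{s_j}. -/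
open MeasureTheory

/-- `S(ℓ,n)`: tuples `(s_1,…,s_ℓ)` of nonnegative integers whose partial sums satisfy
`s_1 + ⋯ + s_m ≤ m + n` for every `m ∈ {1,…,ℓ}` and with `s_1 + ⋯ + s_ℓ = ℓ + n`
(here indexed by `Fin ℓ`, zero-based). -/
def SsetN (ℓ n : ℕ) : Set (Fin ℓ → ℕ) :=
  {s | (∀ m : Fin ℓ, ∑ j ∈ Finset.univ.filter (fun j => j ≤ m), s j ≤ (m : ℕ) + 1 + n) ∧
        ∑ j, s j = ℓ + n}

/-!
The recursion for `Q` says that `X * Q n = ∑ q i * Q j` over `i + j = n + 1`, so multiplying `Q n`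
by `X` amounts to choosing `i ≤ n + 1` with weight `q i` and moving to `Q (n + 1 - i)`. Choosing the
first entry `i` of a tuple in `S(ℓ + 1, n)` leaves a tuple in `S(ℓ, n + 1 - i)`. Both sides of the
identity therefore satisfy the same recursion in `ℓ`, and for `ℓ = 1` both equal `q (n + 1)`.
Integration enters only as a linear functional on polynomials.
-/

open Finset Polynomial

theorem pairwiseDisjoint_antidiagonal_cons_image {ℓ : ℕ} (n : ℕ) (T : ℕ → Set (Fin ℓ → ℕ)) :
    (antidiagonal n : Set (ℕ × ℕ)).PairwiseDisjoint
      fun p ↦ Fin.cons (α := fun _ ↦ ℕ) p.1 '' T p.2 := by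
  intro p hp p' hp' hne
  refine Set.disjoint_left.2 ?_
  rintro _ ⟨s, -, rfl⟩ ⟨s', -, hcons⟩
  exact hne ((HasAntidiagonal.antidiagonal_congr hp hp').2 (Fin.cons_inj.1 hcons).1.symm)

namespace SsetN

theorem finite (ℓ n : ℕ) : (SsetN ℓ n).Finite := by
  refine (Set.finite_Iic fun _ : Fin ℓ ↦ ℓ + n).subset ?_
  rintro s ⟨-, hsum⟩ j
  exact hsum ▸ single_le_sum (fun _ _ ↦ Nat.zero_le _) (mem_univ j)

theorem one_eq_singleton (n : ℕ) : SsetN 1 n = {fun _ ↦ n + 1} := by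
  ext s
  simpa [SsetN, funext_iff, add_comm] using le_of_eq

theorem cons_mem_iff {ℓ n i : ℕ} {s : Fin ℓ → ℕ} :
    (Fin.cons i s : Fin (ℓ + 1) → ℕ) ∈ SsetN (ℓ + 1) n ↔ ∃ k, i + k = n + 1 ∧ s ∈ SsetN ℓ k := by
  have not_succ_le_zero (j : Fin ℓ) : ¬ j.succ ≤ 0 := by simp
  simp only [SsetN, Set.mem_ofPred_eq, Fin.forall_fin_succ, sum_filter, Fin.sum_univ_succ,
    Fin.cons_zero, Fin.cons_succ, Fin.succ_le_succ_iff, Fin.val_succ, Fin.val_zero,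
    Fin.zero_le, if_true, not_succ_le_zero, if_false, sum_const_zero]
  constructor
  · rintro ⟨⟨head_le, partial_le⟩, total⟩
    exact ⟨n + 1 - i, by omega, fun m ↦ by have := partial_le m; omega, by omega⟩
  · rintro ⟨k, hk, partial_le, total⟩
    exact ⟨⟨by omega, fun m ↦ by have := partial_le m; omega⟩, by omega⟩

theorem succ_eq_biUnion (ℓ n : ℕ) :
    SsetN (ℓ + 1) n = ⋃ p ∈ (antidiagonal (n + 1) : Set (ℕ × ℕ)),
      Fin.cons (α := fun _ ↦ ℕ) p.1 '' SsetN ℓ p.2 := by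
  ext t
  induction t using Fin.consCases with
  | cons i s => simp [cons_mem_iff, Fin.cons_inj, and_comm]

end SsetN

section TupleSum

variable {R : Type*} [CommSemiring R]

/-- The generating sum `∑ q_{s_1} ⋯ q_{s_ℓ}` over `S(ℓ,n)`, the right-hand side of the moment
formula, for weights `q` in a commutative semiring. -/
noncomputable def tupleSum (q : ℕ → R) (ℓ n : ℕ) : R :=
  ∑ᶠ s ∈ SsetN ℓ n, ∏ j, q (s j)

theorem tupleSum_one (q : ℕ → R) (n : ℕ) : tupleSum q 1 n = q (n + 1) := by
  simp [tupleSum, SsetN.one_eq_singleton]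

theorem tupleSum_succ (q : ℕ → R) (ℓ n : ℕ) :
    tupleSum q (ℓ + 1) n = ∑ p ∈ antidiagonal (n + 1), q p.1 * tupleSum q ℓ p.2 := by
  rw [tupleSum, SsetN.succ_eq_biUnion,
    finsum_mem_biUnion (pairwiseDisjoint_antidiagonal_cons_image (n + 1) (SsetN ℓ))
      (finite_toSet _) fun p _ ↦ (SsetN.finite ℓ p.2).image _,
    finsum_mem_coe_finset]
  refine sum_congr rfl fun p _ ↦ ?_
  rw [finsum_mem_image (Fin.cons_right_injective (α := fun _ ↦ ℕ) p.1).injOn, tupleSum,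
    mul_finsum_mem' _ _ (SsetN.finite ℓ p.2)]
  simp only [Fin.prod_univ_succ, Fin.cons_zero, Fin.cons_succ]

theorem map_X_pow_succ_mul_eq_tupleSum (L : R[X] →ₗ[R] R) {Q : ℕ → R[X]} {q : ℕ → R}
    (hq : ∀ n, q (n + 1) = L (X * Q n))
    (hXQ : ∀ n, X * Q n = ∑ p ∈ antidiagonal (n + 1), C (q p.1) * Q p.2) (ℓ n : ℕ) :
    L (X ^ (ℓ + 1) * Q n) = tupleSum q (ℓ + 1) n := by
  induction ℓ generalizing n with
  | zero => rw [zero_add, pow_one, tupleSum_one, hq]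
  | succ ℓ ih =>
    calc L (X ^ (ℓ + 2) * Q n)
      _ = L (∑ p ∈ antidiagonal (n + 1), q p.1 • (X ^ (ℓ + 1) * Q p.2)) := by
        rw [pow_succ, mul_assoc, hXQ, mul_sum]
        simp only [smul_eq_C_mul, mul_left_comm]
      _ = ∑ p ∈ antidiagonal (n + 1), q p.1 * tupleSum q (ℓ + 1) p.2 := by
        simp only [map_sum, map_smul, ih, smul_eq_mul]
      _ = tupleSum q (ℓ + 2) n := (tupleSum_succ q (ℓ + 1) n).symm

end TupleSum

theorem X_mul_eq_sum_antidiagonal {R : Type*} [CommRing R] {Q : ℕ → R[X]} {q : ℕ → R}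
    (hq0 : q 0 = 1)
    (hQrec : ∀ n, 1 ≤ n → Q n = X * Q (n - 1) - ∑ i ∈ Icc 1 n, C (q i) * Q (n - i)) (n : ℕ) :
    X * Q n = ∑ p ∈ antidiagonal (n + 1), C (q p.1) * Q p.2 := by
  have hrec := hQrec (n + 1) n.succ_pos
  rw [Nat.add_sub_cancel, eq_sub_iff_add_eq] at hrec
  rw [Nat.sum_antidiagonal_eq_sum_range_succ fun i j ↦ C (q i) * Q j, range_eq_Ico,
    sum_eq_sum_Ico_succ_bot (Nat.succ_pos _), hq0, C_1, one_mul, ← hrec]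
  rfl

theorem stmt3_general {R : Type*} [CommRing R] (L : R[X] →ₗ[R] R) (Q : ℕ → R[X]) (q : ℕ → R)
    (hq0 : q 0 = 1) (hq : ∀ n : ℕ, 1 ≤ n → q n = L (X * Q (n - 1)))
    (hQrec : ∀ n : ℕ, 1 ≤ n → Q n = X * Q (n - 1) - ∑ i ∈ Icc 1 n, C (q i) * Q (n - i)) :
    ∀ ℓ n : ℕ, 1 ≤ ℓ → L (X ^ ℓ * Q n) = ∑ᶠ s ∈ SsetN ℓ n, ∏ j, q (s j)
  | ℓ + 1, n, _ => map_X_pow_succ_mul_eq_tupleSum L (fun n ↦ hq (n + 1) n.succ_pos)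
      (X_mul_eq_sum_antidiagonal hq0 hQrec) ℓ n

theorem integrable_of_continuous_of_measure_compl_eq_zero {α E : Type*} [TopologicalSpace α]
    [T2Space α] [MeasurableSpace α] [OpensMeasurableSpace α] [NormedAddCommGroup E] {μ : Measure α}
    [IsFiniteMeasureOnCompacts μ] {K : Set α} {f : α → E} (hf : Continuous f) (hK : IsCompact K)
    (hKc : μ Kᶜ = 0) : Integrable f μ := by
  rw [← Measure.restrict_eq_self_of_ae_mem (mem_ae_iff.2 hKc)]
  exact hf.continuousOn.integrableOn_compact hK

/-- The moment functional `p ↦ ∫ p dμ` of a measure all of whose moments are finite. -/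
noncomputable def momentFunctional (μ : Measure ℝ) (hμ : ∀ p : ℝ[X], Integrable p.eval μ) :
    ℝ[X] →ₗ[ℝ] ℝ where
  toFun p := ∫ x, p.eval x ∂μ
  map_add' p p' := by simp only [eval_add, integral_add (hμ p) (hμ p')]
  map_smul' c p := by simp only [eval_smul, integral_smul, RingHom.id_apply]

theorem stmt3 (μ : Measure ℝ) [IsProbabilityMeasure μ]
    (K : Set ℝ) (hK : IsCompact K) (hKc : μ Kᶜ = 0)
    (Q : ℕ → Polynomial ℝ) (q : ℕ → ℝ)
    (hQ0 : Q 0 = 1) (hq0 : q 0 = 1)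
    (hq : ∀ n : ℕ, 1 ≤ n → q n = ∫ x, x * (Q (n - 1)).eval x ∂μ)
    (hQrec : ∀ n : ℕ, 1 ≤ n →
      Q n = Polynomial.X * Q (n - 1) - ∑ i ∈ Finset.Icc 1 n, Polynomial.C (q i) * Q (n - i)) :
    ∀ ℓ n : ℕ, 1 ≤ ℓ →
      (∫ x, x ^ ℓ * (Q n).eval x ∂μ) =
        ∑ᶠ s ∈ SsetN ℓ n, ∏ j, q (s j) := by
  have hμ (p : ℝ[X]) : Integrable p.eval μ :=
    integrable_of_continuous_of_measure_compl_eq_zero p.continuous hK hKc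
  simpa [momentFunctional] using
    stmt3_general (momentFunctional μ hμ) Q q hq0 (by simpa [momentFunctional] using hq) hQrec
end

section
/- Fix integers N ≥ 1 and t ≥ 1. Let W be an arbitrary real N×N matrix, let (u_s)_{s=1}^{t} be vectors in ℝ^N, and let (b_{s,i})_{1≤i≤s≤t} and (d_{s,i})_{1≤i≤s≤t−1} be real numbers. Define r_s := W·u_s − Σ_{i=1}^{s} b_{s,i}·u_i for 1 ≤ s ≤ t, and ū_1 := u_1, ū_s := u_s − Σ_{i=1}^{s−1} d_{s−1,i}·r_i for 2 ≤ s ≤ t. Let B ∈ ℝ^{t×t} be the lower triangular matrix with entries B_{s,i} = b_{s,i} for i ≤ s, and D ∈ ℝ^{t×t} the strictly lower triangular matrix with entries D_{s,i} = d_{s−1,i} for i < s. Over the polynomial ring ℝ[λ], the t×t matrix I_t − λ·D + B·D is lower triangular with all diagonal entries equal to 1, hence invertible in the ring of t×t matrices over ℝ[λ]; let P(λ) := (I_t − λ·D + B·D)^{−1}·(λ·I_t − B), a lower triangular matrix whose entries P_{s,i}(λ) are real polynomials in λ. Then r_s = Σ_{i=1}^{s} P_{s,i}(W)·ū_i for every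 1 ≤ s ≤ t, where P_{s,i}(W) denotes the evaluation of the polynomial P_{s,i} at the matrix W. -/
/-!
Let `X` act on vectors as `W`, so that matrices over `ℝ[X]` act on families of vectors. With
`L = X • 1 - B` the two recursions read `r = L • u` and `u = ubar + D • r`. Eliminating `u` gives
`(1 - L * D) • r = L • ubar`, and `1 - L * D = 1 - X • D + B * D` is unitriangular because `L` is
lower triangular and `D` strictly so.
-/

open Polynomial Module

/-- Strictly lower triangular matrices. Unlike for `Matrix.IsLowerTriangular` the diagonal vanishes
too, which makes `1 - K` unitriangular and hence invertible over any commutative ring. -/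
def IsStrictlyLowerTriangular {ι R : Type*} [LE ι] [Zero R] (K : Matrix ι ι R) : Prop :=
  ∀ ⦃i j⦄, i ≤ j → K i j = 0

namespace IsStrictlyLowerTriangular

variable {ι R S : Type*}

theorem map [LE ι] [Zero R] [Zero S] {K : Matrix ι ι R} (hK : IsStrictlyLowerTriangular K)
    {f : R → S} (hf : f 0 = 0) : IsStrictlyLowerTriangular (K.map f) := fun i j hij => by
  rw [Matrix.map_apply, hK hij, hf]

theorem mul_of_isLowerTriangular_left [LinearOrder ι] [Fintype ι] [NonUnitalNonAssocSemiring R]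
    {L K : Matrix ι ι R} (hL : L.IsLowerTriangular) (hK : IsStrictlyLowerTriangular K) :
    IsStrictlyLowerTriangular (L * K) := fun i j hij => by
  rw [Matrix.mul_apply]
  refine Finset.sum_eq_zero fun k _ => ?_
  rcases lt_or_ge i k with hik | hki
  · rw [hL (OrderDual.toDual_lt_toDual.mpr hik), zero_mul]
  · rw [hK (hki.trans hij), mul_zero]

theorem isLowerTriangular [Preorder ι] [Zero R] {K : Matrix ι ι R}
    (hK : IsStrictlyLowerTriangular K) : K.IsLowerTriangular :=
  fun _ _ hij => hK (OrderDual.toDual_lt_toDual.mp hij).le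

theorem isLowerTriangular_one_sub [LinearOrder ι] [Ring R] {K : Matrix ι ι R}
    (hK : IsStrictlyLowerTriangular K) : (1 - K).IsLowerTriangular :=
  Matrix.blockTriangular_one.sub hK.isLowerTriangular

theorem det_one_sub [LinearOrder ι] [Fintype ι] [CommRing R] {K : Matrix ι ι R}
    (hK : IsStrictlyLowerTriangular K) : (1 - K).det = 1 := by
  rw [Matrix.det_of_isLowerTriangular _ hK.isLowerTriangular_one_sub]
  refine Finset.prod_eq_one fun i _ => ?_
  rw [Matrix.sub_apply, Matrix.one_apply_eq, hK le_rfl, sub_zero]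

theorem isUnit_det_one_sub [LinearOrder ι] [Fintype ι] [CommRing R] {K : Matrix ι ι R}
    (hK : IsStrictlyLowerTriangular K) : IsUnit (1 - K).det :=
  hK.det_one_sub ▸ isUnit_one

theorem isLowerTriangular_inv_one_sub [LinearOrder ι] [Fintype ι] [CommRing R] {K : Matrix ι ι R}
    (hK : IsStrictlyLowerTriangular K) : (1 - K)⁻¹.IsLowerTriangular :=
  haveI := Matrix.invertibleOfIsUnitDet _ hK.isUnit_det_one_sub
  Matrix.blockTriangular_inv_of_blockTriangular hK.isLowerTriangular_one_sub

theorem sum_filter_lt_smul [LinearOrder ι] [Fintype ι] {M : Type*} [Zero R] [AddCommMonoid M]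
    [SMulWithZero R M] {K : Matrix ι ι R} (hK : IsStrictlyLowerTriangular K) (v : ι → M) (s : ι) :
    ∑ i with i < s, K s i • v i = ∑ i, K s i • v i :=
  Finset.sum_filter_of_ne fun i _ hne =>
    lt_of_not_ge fun hsi => hne (by rw [hK hsi, zero_smul])

end IsStrictlyLowerTriangular

theorem sum_filter_le_smul_of_isLowerTriangular {ι R M : Type*} [LinearOrder ι] [Fintype ι]
    [Zero R] [AddCommMonoid M] [SMulWithZero R M] {L : Matrix ι ι R} (hL : L.IsLowerTriangular)
    (v : ι → M) (s : ι) : ∑ i with i ≤ s, L s i • v i = ∑ i, L s i • v i :=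
  Finset.sum_filter_of_ne fun i _ hne =>
    le_of_not_gt fun hsi => hne (by rw [hL (OrderDual.toDual_lt_toDual.mpr hsi), zero_smul])

theorem one_sub_X_smul_map_C_add_mul {ι R : Type*} [Fintype ι] [DecidableEq ι] [Ring R]
    (B D : Matrix ι ι R) :
    1 - (X : R[X]) • D.map C + B.map C * D.map C =
      1 - ((X : R[X]) • 1 - B.map C) * D.map C := by
  rw [sub_mul, smul_mul_assoc, one_mul, sub_sub_eq_add_sub, sub_add_eq_add_sub]

theorem isLowerTriangular_X_smul_one_sub_map_C {ι R : Type*} [LinearOrder ι] [Ring R]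
    {B : Matrix ι ι R} (hB : B.IsLowerTriangular) :
    ((X : R[X]) • 1 - B.map C).IsLowerTriangular := by
  rw [← Matrix.diagonal_one, ← Matrix.diagonal_smul]
  exact (Matrix.blockTriangular_diagonal _).sub (hB.map C)

theorem one_sub_mul_smul_eq_smul {S M : Type*} [Ring S] [AddCommGroup M] [Module S M]
    {L D : S} {u r ubar : M} (hr : r = L • u) (hubar : ubar = u - D • r) :
    (1 - L * D) • r = L • ubar := by
  rw [hubar, smul_sub, ← hr, sub_smul, one_smul, mul_smul]

section MatrixAction

open scoped Matrix.Module

variable {ι R : Type*} [Fintype ι]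

theorem eq_inv_one_sub_mul_smul [DecidableEq ι] {M : Type*} [CommRing R] [AddCommGroup M]
    [Module R M] {L D : Matrix ι ι R} (hdet : IsUnit (1 - L * D).det) {u r ubar : ι → M}
    (hr : r = L • u) (hubar : ubar = u - D • r) : r = ((1 - L * D)⁻¹ * L) • ubar := by
  rw [mul_smul, ← one_sub_mul_smul_eq_smul hr hubar, ← mul_smul, Matrix.nonsing_inv_mul _ hdet,
    one_smul]

variable {A M : Type*} [CommRing R] [Semiring A] [Algebra R A] [AddCommGroup M] [Module R M]
  [Module A M] [IsScalarTower R A M]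

theorem map_C_smul_apply [DecidableEq ι] {a : A} (B : Matrix ι ι R) (v : ι → AEval R M a)
    (s : ι) : (B.map C • v) s = ∑ i, B s i • v i := by
  simp only [Matrix.Module.smul_apply, Matrix.map_apply, AEval.C_smul]

theorem stmt7_general [LinearOrder ι] (a : A) {u r ubar : ι → M} {B D : Matrix ι ι R}
    (hB : B.IsLowerTriangular) (hD : IsStrictlyLowerTriangular D)
    (hr : ∀ s, r s = a • u s - ∑ i with i ≤ s, B s i • u i)
    (hubar : ∀ s, ubar s = u s - ∑ i with i < s, D s i • r i) (s : ι) :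
    r s = ∑ i with i ≤ s,
      aeval a (((1 - (X : R[X]) • D.map C + B.map C * D.map C)⁻¹ *
        ((X : R[X]) • 1 - B.map C)) s i) • ubar i := by
  set L : Matrix ι ι R[X] := (X : R[X]) • 1 - B.map C with hL
  let toAEval : (ι → M) → ι → AEval R M a := fun v i => AEval.of R M a (v i)
  have hLtri : L.IsLowerTriangular := isLowerTriangular_X_smul_one_sub_map_C hB
  have hLD : IsStrictlyLowerTriangular (L * D.map C) :=
    .mul_of_isLowerTriangular_left hLtri (hD.map C_0)
  have hr_act : toAEval r = L • toAEval u := funext fun s => by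
    rw [hL, sub_smul, smul_assoc, one_smul, Pi.sub_apply, map_C_smul_apply, Pi.smul_apply,
      AEval.X_smul_of]
    simp only [toAEval, hr, sum_filter_le_smul_of_isLowerTriangular hB, map_sub, map_sum, map_smul]
  have hubar_act : toAEval ubar = toAEval u - D.map C • toAEval r := funext fun s => by
    rw [Pi.sub_apply, map_C_smul_apply]
    simp only [toAEval, hubar, hD.sum_filter_lt_smul, map_sub, map_sum, map_smul]
  have hsolve : toAEval r = ((1 - L * D.map C)⁻¹ * L) • toAEval ubar :=
    eq_inv_one_sub_mul_smul hLD.isUnit_det_one_sub hr_act hubar_act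
  have hPtri : ((1 - L * D.map C)⁻¹ * L).IsLowerTriangular :=
    hLD.isLowerTriangular_inv_one_sub.mul hLtri
  apply (AEval.of R M a).injective
  rw [one_sub_X_smul_map_C_add_mul, map_sum]
  simp only [AEval.of_aeval_smul]
  rw [sum_filter_le_smul_of_isLowerTriangular hPtri]
  exact congrFun hsolve s

end MatrixAction

theorem stmt7 (N t : ℕ) (hN : 1 ≤ N) (ht : 1 ≤ t)
    (W : Matrix (Fin N) (Fin N) ℝ)
    (u r ubar : Fin t → Fin N → ℝ)
    (B D : Matrix (Fin t) (Fin t) ℝ)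
    (hB : ∀ i j : Fin t, i < j → B i j = 0)
    (hD : ∀ i j : Fin t, i ≤ j → D i j = 0)
    (hr : ∀ s : Fin t,
      r s = W.mulVec (u s) - ∑ i ∈ Finset.univ.filter (fun i => i ≤ s), B s i • u i)
    (hubar : ∀ s : Fin t,
      ubar s = u s - ∑ i ∈ Finset.univ.filter (fun i => i < s), D s i • r i) :
    ∀ s : Fin t,
      r s = ∑ i ∈ Finset.univ.filter (fun i => i ≤ s),
        (Polynomial.aeval W
          (((((1 : Matrix (Fin t) (Fin t) (Polynomial ℝ)) -
                (Polynomial.X : Polynomial ℝ) • D.map Polynomial.C +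
                (B.map Polynomial.C) * (D.map Polynomial.C))⁻¹ *
              ((Polynomial.X : Polynomial ℝ) • (1 : Matrix (Fin t) (Fin t) (Polynomial ℝ)) -
                B.map Polynomial.C)) s i))).mulVec (ubar i) :=
  stmt7_general W (fun i j hij => hB i j hij) hD hr hubar
end

section
/- Let μ be a compactly supported Borel probability measure on ℝ with moments m_k := ∫ λ^k dμ(λ). Suppose (κ_i)_{i≥1} is a sequence of real numbers satisfying the moment–cumulant relations m_k = Σ_{π ∈ NC(k)} ∏_{B ∈ π} κ_{|B|} for every k ≥ 1. Then for every t ≥ 1 and every strictly lower triangular D ∈ ℝ^{t×t}, the lower triangular matrix B := Σ_{i=1}^{t} κ_i·D^{i−1} (with D^0 := I_t) satisfies ∫ (I_t − λ·D + B·D)^{−1}·(λ·I_t − B) dμ(λ) = 0 entrywise. -/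
open MeasureTheory

/-!
Scan the points of a non-crossing partition from left to right, keeping a stack of the points whose
block is not yet complete. Reading a point pushes it, and if it is the largest of its block, that
block is exactly the top of the stack and is popped. Let `F n` be the generating function, in the
height `h` of the stack, of the weights of all ways to read `n` more points starting from height `h`
and ending with an empty stack. With `R = ∑ κ (i + 1) X ^ i` this gives
`(1 + X R) F n = m n + X F (n + 1)`, where `m n = F n (0)` is the sum over `NC(n)`.

Put `v = (1 + X R)⁻¹`. Then `m n v = F n - (X v) F (n + 1)`, so `∑ m (n + j) (X v) ^ n v`
telescopes to `F j`, where `F 0 = 1` and `F 1 = R`. Since `(1 + X R - x X)⁻¹ = ∑ x ^ n (X v) ^ n v`,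
integrating `(1 + X R - x X)⁻¹ (x - R)` against `μ` gives `F 1 - F 0 R = 0`. Finally, substitute the
nilpotent matrix `D` for `X`.
-/

section Noncrossing

open Finset

theorem exists_parts_eq_erase {α : Type*} [DecidableEq α] {U I : Finset α} (π : Finpartition U)
    (hI : I ∈ π.parts) :
    ∃ σ : Finpartition (U \ I), σ.parts = π.parts.erase I := by
  have hsup : (π.parts.erase I).sup id = U \ I := by
    ext x
    simp only [mem_sup, mem_erase, id, mem_sdiff]
    constructor
    · rintro ⟨B, ⟨hBI, hB⟩, hx⟩
      exact ⟨π.subset hB hx, fun hxI => hBI (π.eq_of_mem_parts hB hI hx hxI)⟩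
    · rintro ⟨hxU, hxI⟩
      obtain ⟨B, hB, hx⟩ := π.exists_mem hxU
      exact ⟨B, ⟨fun h => hxI (h ▸ hx), hB⟩, hx⟩
  exact ⟨π.ofSubset (erase_subset I π.parts) hsup, rfl⟩

variable {α : Type*} [LinearOrder α] {U V Q I : Finset α} {q : α}

/-- `IsNonCrossing` for partitions of an arbitrary finite subset of a linear order, so that blocks
can be removed from a partition. -/
def Noncrossing (π : Finpartition U) : Prop :=
  ∀ a b c d : α, a < b → b < c → c < d →
    ∀ B₁ ∈ π.parts, ∀ B₂ ∈ π.parts, a ∈ B₁ → c ∈ B₁ → b ∈ B₂ → d ∈ B₂ → B₁ = B₂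

theorem Noncrossing.of_parts_subset {π : Finpartition U} {σ : Finpartition V}
    (hπ : Noncrossing π) (h : σ.parts ⊆ π.parts) : Noncrossing σ :=
  fun a b c d hab hbc hcd B₁ h₁ B₂ h₂ => hπ a b c d hab hbc hcd B₁ (h h₁) B₂ (h h₂)

theorem Noncrossing.extend {W : Finset α} {σ : Finpartition V} (hσ : Noncrossing σ)
    (hI : I ≠ ⊥) (hVI : Disjoint V I) (hW : V ⊔ I = W)
    (hgap : ∀ x ∈ I, ∀ z ∈ I, ∀ y ∈ V, x < y → ¬ y < z) :
    Noncrossing (σ.extend hI hVI hW) := by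
  intro a b c d hab hbc hcd B₁ h₁ B₂ h₂ ha hc hb hd
  rcases mem_insert.1 h₁ with rfl | hσ₁ <;> rcases mem_insert.1 h₂ with rfl | hσ₂
  · rfl
  · exact absurd hbc (hgap a ha c hc b (σ.subset hσ₂ hb) hab)
  · exact absurd hcd (hgap b hb d hd c (σ.subset hσ₁ hc) hbc)
  · exact hσ a b c d hab hbc hcd B₁ hσ₁ B₂ hσ₂ ha hc hb hd

open Classical in
/-- The non-crossing partitions of `U` all of whose blocks meet `Q`. When `U \ Q` lies below `Q`, it
is the stack of points already read whose blocks are to be completed by points of `Q`. -/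
noncomputable def noncrossingMeeting (U Q : Finset α) : Finset (Finpartition U) :=
  {π | Noncrossing π ∧ ∀ B ∈ π.parts, ¬ Disjoint B Q}

theorem mem_noncrossingMeeting {π : Finpartition U} :
    π ∈ noncrossingMeeting U Q ↔ Noncrossing π ∧ ∀ B ∈ π.parts, ¬ Disjoint B Q := by
  simp [noncrossingMeeting]

theorem noncrossingMeeting_mono {Q' : Finset α} (h : Q ⊆ Q') :
    noncrossingMeeting U Q ⊆ noncrossingMeeting U Q' := fun π hπ => by
  rw [mem_noncrossingMeeting] at hπ ⊢
  exact ⟨hπ.1, fun B hB hdisj => hπ.2 B hB (disjoint_of_subset_right h hdisj)⟩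

theorem extend_mem_noncrossingMeeting_insert {σ : Finpartition (U \ I)} (hI : I ≠ ⊥)
    (hIU : U \ I ⊔ I = U) (hqI : q ∈ I)
    (hgap : ∀ x ∈ I, ∀ z ∈ I, ∀ y ∈ U, x < y → y < z → y ∈ I)
    (hσ : σ ∈ noncrossingMeeting (U \ I) Q) :
    σ.extend hI sdiff_disjoint hIU ∈ noncrossingMeeting U (insert q Q) := by
  rw [mem_noncrossingMeeting] at hσ ⊢
  refine ⟨hσ.1.extend _ _ _ fun x hx z hz y hy hxy hyz =>
    (mem_sdiff.1 hy).2 (hgap x hx z hz y (mem_sdiff.1 hy).1 hxy hyz), fun B hB => ?_⟩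
  rcases mem_insert.1 hB with rfl | hB
  · exact not_disjoint_iff.2 ⟨q, hqI, mem_insert_self q Q⟩
  · exact fun h => hσ.2 B hB (disjoint_of_subset_right (subset_insert q Q) h)

theorem mem_noncrossingMeeting_of_parts_eq_erase {π : Finpartition U} {σ : Finpartition (U \ I)}
    (hπ : π ∈ noncrossingMeeting U (insert q Q)) (hI : I ∈ π.parts) (hqI : q ∈ I)
    (hσ : σ.parts = π.parts.erase I) : σ ∈ noncrossingMeeting (U \ I) Q := by
  rw [mem_noncrossingMeeting] at hπ ⊢
  refine ⟨hπ.1.of_parts_subset (hσ ▸ erase_subset I π.parts), fun B hB hdisj => ?_⟩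
  obtain ⟨hBI, hBπ⟩ := mem_erase.1 (hσ ▸ hB)
  have hqB : q ∉ B := fun hqB => hBI (π.eq_of_mem_parts hBπ hI hqB hqI)
  exact hπ.2 B hBπ (disjoint_insert_right.2 ⟨hqB, hdisj⟩)

theorem exists_filter_le_mem_parts {π : Finpartition U} (hle : ∀ x ∈ U \ Q, x ≤ q)
    (hlt : ∀ y ∈ Q, q < y) (hπ : π ∈ noncrossingMeeting U (insert q Q))
    (hπQ : π ∉ noncrossingMeeting U Q) :
    ∃ a ∈ U \ Q, {x ∈ U \ Q | a ≤ x} ∈ π.parts := by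
  rw [mem_noncrossingMeeting] at hπ hπQ
  obtain ⟨I, hI, hIQ⟩ : ∃ I ∈ π.parts, Disjoint I Q := by simpa [hπ.1] using hπQ
  have hqI : q ∈ I := by
    by_contra hqI
    exact hπ.2 I hI (disjoint_insert_right.2 ⟨hqI, hIQ⟩)
  have hIsub : I ⊆ U \ Q := subset_sdiff.2 ⟨π.subset hI, hIQ⟩
  have hmin := I.min'_mem ⟨q, hqI⟩
  set a := I.min' ⟨q, hqI⟩
  refine ⟨a, hIsub hmin, ?_⟩
  convert hI using 1
  refine Subset.antisymm (fun y hy => ?_) fun y hy => mem_filter.2 ⟨hIsub hy, I.min'_le y hy⟩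
  obtain ⟨hyUQ, hay⟩ := mem_filter.1 hy
  rcases hay.eq_or_lt with rfl | hay
  · exact hmin
  rcases (hle y hyUQ).eq_or_lt with rfl | hyq
  · exact hqI
  -- A block through `y` other than `I` would reach some `d > q`, and `a < y < q < d` would cross.
  obtain ⟨J, hJ, hyJ⟩ := π.exists_mem (mem_sdiff.1 hyUQ).1
  obtain ⟨d, hdJ, hd⟩ := not_disjoint_iff.1 (hπ.2 J hJ)
  suffices I = J from this ▸ hyJ
  rcases mem_insert.1 hd with rfl | hdQ
  · exact π.eq_of_mem_parts hI hJ hqI hdJ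
  · exact hπ.1 a y q d hay hyq (hlt d hdQ) I hI J hJ hmin hqI hyJ hdJ

theorem filter_le_injOn (P : Finset α) :
    Set.InjOn (fun a => {x ∈ P | a ≤ x}) (P : Set α) := by
  intro a ha b hb hab
  have hiff (x : α) (hx : x ∈ P) : a ≤ x ↔ b ≤ x := filter_inj'.1 hab hx
  exact le_antisymm ((hiff b hb).2 le_rfl) ((hiff a ha).1 le_rfl)

theorem noncrossingMeeting_insert_sdiff (hle : ∀ x ∈ U \ Q, x ≤ q)
    (hlt : ∀ y ∈ Q, q < y) :
    noncrossingMeeting U (insert q Q) \ noncrossingMeeting U Q =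
      (U \ Q).biUnion fun a =>
        {π ∈ noncrossingMeeting U (insert q Q) | {x ∈ U \ Q | a ≤ x} ∈ π.parts} := by
  ext π
  rw [mem_sdiff, mem_biUnion]
  simp only [mem_filter (s := noncrossingMeeting U _)]
  constructor
  · rintro ⟨hπ, hπQ⟩
    obtain ⟨a, ha, haπ⟩ := exists_filter_le_mem_parts hle hlt hπ hπQ
    exact ⟨a, ha, hπ, haπ⟩
  · rintro ⟨a, -, hπ, haπ⟩
    refine ⟨hπ, fun hπQ => (mem_noncrossingMeeting.1 hπQ).2 _ haπ ?_⟩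
    exact disjoint_of_subset_left (filter_subset _ _) sdiff_disjoint

theorem pairwiseDisjoint_filter_mem_parts (S : Finset (Finpartition U)) (hq : q ∈ U \ Q)
    (hle : ∀ x ∈ U \ Q, x ≤ q) :
    ((U \ Q : Finset α) : Set α).PairwiseDisjoint
      fun a => {π ∈ S | {x ∈ U \ Q | a ≤ x} ∈ π.parts} := by
  intro a ha b hb hab
  refine disjoint_left.2 fun π hπa hπb => hab (filter_le_injOn _ ha hb ?_)
  exact π.eq_of_mem_parts (mem_filter.1 hπa).2 (mem_filter.1 hπb).2
    (mem_filter.2 ⟨hq, hle a ha⟩) (mem_filter.2 ⟨hq, hle b hb⟩)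

variable {R : Type*} [CommSemiring R] (κ : ℕ → R)

/-- The sum of the products of cumulants over `noncrossingMeeting U Q`. -/
noncomputable def meetingWeight (U Q : Finset α) : R :=
  ∑ π ∈ noncrossingMeeting U Q, ∏ B ∈ π.parts, κ #B

theorem sum_filter_mem_parts (hIU : I ⊆ U) (hqI : q ∈ I)
    (hgap : ∀ x ∈ I, ∀ z ∈ I, ∀ y ∈ U, x < y → y < z → y ∈ I) :
    ∑ π ∈ noncrossingMeeting U (insert q Q) with I ∈ π.parts, ∏ B ∈ π.parts, κ #B =
      κ #I * meetingWeight κ (U \ I) Q := by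
  have hI : I ≠ ⊥ := ne_empty_of_mem hqI
  have hUI : U \ I ⊔ I = U := sdiff_sup_cancel hIU
  have hIσ (σ : Finpartition (U \ I)) : I ∉ σ.parts :=
    fun h => (mem_sdiff.1 (σ.subset h hqI)).2 hqI
  rw [meetingWeight, mul_sum]
  symm
  refine sum_bij (fun σ _ => σ.extend hI sdiff_disjoint hUI) (fun σ hσ => ?_)
    (fun σ _ τ _ h => ?_) (fun π hπ => ?_) (fun σ _ => ?_)
  · exact mem_filter.2
      ⟨extend_mem_noncrossingMeeting_insert hI hUI hqI hgap hσ, mem_insert_self I σ.parts⟩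
  · have hparts : insert I σ.parts = insert I τ.parts := congrArg Finpartition.parts h
    ext1
    rw [← erase_insert (hIσ σ), hparts, erase_insert (hIσ τ)]
  · obtain ⟨hπ, hIπ⟩ := mem_filter.1 hπ
    obtain ⟨σ, hσ⟩ := exists_parts_eq_erase π hIπ
    refine ⟨σ, mem_noncrossingMeeting_of_parts_eq_erase hπ hIπ hqI hσ, Finpartition.ext ?_⟩
    change insert I σ.parts = π.parts
    rw [hσ, insert_erase hIπ]
  · exact (prod_insert (f := fun B => κ #B) (hIσ σ)).symm

theorem meetingWeight_insert (hq : q ∈ U) (hle : ∀ x ∈ U \ Q, x ≤ q) (hlt : ∀ y ∈ Q, q < y) :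
    meetingWeight κ U (insert q Q) = meetingWeight κ U Q +
      ∑ a ∈ U \ Q, κ #{x ∈ U \ Q | a ≤ x} * meetingWeight κ (U \ {x ∈ U \ Q | a ≤ x}) Q := by
  have hqUQ : q ∈ U \ Q := mem_sdiff.2 ⟨hq, fun h => (hlt q h).false⟩
  conv_lhs => rw [meetingWeight, ← sum_sdiff (noncrossingMeeting_mono (subset_insert q Q)),
    noncrossingMeeting_insert_sdiff hle hlt,
    sum_biUnion (pairwiseDisjoint_filter_mem_parts _ hqUQ hle), add_comm]
  refine congrArg (meetingWeight κ U Q + ·) (sum_congr rfl fun a ha => ?_)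
  refine sum_filter_mem_parts κ ((filter_subset _ _).trans sdiff_subset)
    (mem_filter.2 ⟨hqUQ, hle a ha⟩) fun x hx z hz y hy hxy hyz => ?_
  have hyq : y < q := hyz.trans_le (hle z (mem_filter.1 hz).1)
  exact mem_filter.2 ⟨mem_sdiff.2 ⟨hy, fun hyQ => (hlt y hyQ).not_gt hyq⟩,
    (mem_filter.1 hx).2.trans hxy.le⟩

theorem meetingWeight_empty_right (U : Finset α) :
    meetingWeight κ U ∅ = if #U = 0 then 1 else 0 := by
  rcases U.eq_empty_or_nonempty with rfl | ⟨x, hx⟩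
  · have hparts (π : Finpartition (∅ : Finset α)) : π.parts = ∅ := π.parts_eq_empty_iff.2 rfl
    have huniv : noncrossingMeeting (∅ : Finset α) ∅ = {Finpartition.empty (Finset α)} := by
      ext π
      have hπ : π = Finpartition.empty (Finset α) := Finpartition.ext (by simp [hparts])
      simp [mem_noncrossingMeeting, Noncrossing, hparts, hπ]
    simp [meetingWeight, huniv]
  · have hempty : noncrossingMeeting U ∅ = ∅ := eq_empty_of_forall_notMem fun π hπ => by
      obtain ⟨B, hB, -⟩ := π.exists_mem hx
      exact (mem_noncrossingMeeting.1 hπ).2 B hB (disjoint_empty_right B)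
    rw [meetingWeight, hempty, sum_empty, if_neg (card_ne_zero_of_mem hx)]

theorem sum_card_filter_le {M : Type*} [AddCommMonoid M] (g : ℕ → M) (P : Finset α) :
    ∑ a ∈ P, g #{x ∈ P | a ≤ x} = ∑ s ∈ range #P, g (s + 1) := by
  induction P using Finset.induction_on_min with
  | empty => simp
  | insert a P haP ih =>
    have ha : a ∉ P := fun h => (haP a h).false
    have htop : {x ∈ insert a P | a ≤ x} = insert a P :=
      filter_true_of_mem (forall_mem_insert _ _ _ |>.2 ⟨le_rfl, fun x hx => (haP x hx).le⟩)
    rw [sum_insert ha, htop, card_insert_of_notMem ha, sum_range_succ, ← ih, add_comm]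
    congr 1
    refine sum_congr rfl fun b hb => ?_
    rw [filter_insert, if_neg (haP b hb).not_ge]

end Noncrossing

section StackSeries

open Finset PowerSeries

variable {R : Type*} [CommSemiring R] (κ : ℕ → R)

/-- The R-transform `∑ κ (i + 1) X ^ i` of a sequence of cumulants. -/
noncomputable def cumulantSeries : R⟦X⟧ :=
  PowerSeries.mk fun i => κ (i + 1)

/-- The coefficient of `X ^ h` is the total weight of the ways to read `n` points starting with `h`
points on the stack and ending with an empty stack. Reading a point either just pushes it (the
second summand) or also pops the topmost `i + 1` points, with weight `κ (i + 1)` (the first). -/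
noncomputable def stackSeries : ℕ → R⟦X⟧
  | 0 => 1
  | n + 1 =>
    cumulantSeries κ * stackSeries n + PowerSeries.mk fun h => coeff (h + 1) (stackSeries n)

theorem stackSeries_one : stackSeries κ 1 = cumulantSeries κ := by
  ext h
  simp [stackSeries, coeff_one]

theorem coeff_stackSeries_succ (n h : ℕ) :
    coeff h (stackSeries κ (n + 1)) = coeff (h + 1) (stackSeries κ n) +
      ∑ s ∈ range (h + 1), κ (s + 1) * coeff (h - s) (stackSeries κ n) := by
  rw [stackSeries, map_add, coeff_mk, add_comm, coeff_mul,
    Nat.sum_antidiagonal_eq_sum_range_succ_mk]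
  simp [cumulantSeries]

theorem one_add_X_mul_cumulantSeries_mul_stackSeries (n : ℕ) :
    (1 + X * cumulantSeries κ) * stackSeries κ n =
      C (constantCoeff (stackSeries κ n)) + X * stackSeries κ (n + 1) := by
  calc (1 + X * cumulantSeries κ) * stackSeries κ n
    _ = stackSeries κ n + X * (cumulantSeries κ * stackSeries κ n) := by ring
    _ = X * PowerSeries.mk (fun h => coeff (h + 1) (stackSeries κ n)) +
          C (constantCoeff (stackSeries κ n)) + X * (cumulantSeries κ * stackSeries κ n) :=
      congrArg (· + _) (eq_X_mul_shift_add_const (stackSeries κ n))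
    _ = C (constantCoeff (stackSeries κ n)) +
          X * (cumulantSeries κ * stackSeries κ n +
            PowerSeries.mk fun h => coeff (h + 1) (stackSeries κ n)) := by ring

theorem meetingWeight_eq_coeff_stackSeries {α : Type*} [LinearOrder α] {U Q : Finset α}
    (hQU : Q ⊆ U) (hlt : ∀ x ∈ U \ Q, ∀ y ∈ Q, x < y) :
    meetingWeight κ U Q = coeff #(U \ Q) (stackSeries κ #Q) := by
  induction Q using Finset.induction_on_min generalizing U with
  | empty => simp [meetingWeight_empty_right, stackSeries, coeff_one]
  | insert q Q hqQ ih =>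
    obtain ⟨hqU, hQU⟩ := insert_subset_iff.1 hQU
    have hqnQ : q ∉ Q := fun h => (hqQ q h).false
    have hUQ : U \ Q = insert q (U \ insert q Q) := by grind
    have hle : ∀ x ∈ U \ Q, x ≤ q := by grind
    have hlt' : ∀ x ∈ U \ Q, ∀ y ∈ Q, x < y := fun x hx y hy => (hle x hx).trans_lt (hqQ y hy)
    have hcard : #(U \ Q) = #(U \ insert q Q) + 1 := by
      rw [hUQ, card_insert_of_notMem (by simp)]
    rw [meetingWeight_insert κ hqU hle hqQ, card_insert_of_notMem hqnQ, coeff_stackSeries_succ,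
      ih hQU hlt', hcard]
    congr 1
    calc ∑ a ∈ U \ Q, κ #{x ∈ U \ Q | a ≤ x} * meetingWeight κ (U \ {x ∈ U \ Q | a ≤ x}) Q
      _ = ∑ a ∈ U \ Q, κ #{x ∈ U \ Q | a ≤ x} *
            coeff (#(U \ Q) - #{x ∈ U \ Q | a ≤ x}) (stackSeries κ #Q) := by
        refine sum_congr rfl fun a _ => ?_
        rw [ih (by grind) (by grind), sdiff_right_comm, card_sdiff_of_subset (filter_subset _ _)]
      _ = ∑ s ∈ range #(U \ Q), κ (s + 1) * coeff (#(U \ Q) - (s + 1)) (stackSeries κ #Q) :=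
        sum_card_filter_le (fun s => κ s * coeff (#(U \ Q) - s) (stackSeries κ #Q)) _
      _ = ∑ s ∈ range (#(U \ insert q Q) + 1),
            κ (s + 1) * coeff (#(U \ insert q Q) - s) (stackSeries κ #Q) := by
        simp only [hcard, Nat.add_sub_add_right]

theorem finsum_isNonCrossing_eq_constantCoeff_stackSeries (k : ℕ) :
    ∑ᶠ π ∈ {π : Finpartition (univ : Finset (Fin k)) | IsNonCrossing π}, ∏ B ∈ π.parts, κ #B =
      constantCoeff (stackSeries κ k) := by
  have hset : {π : Finpartition (univ : Finset (Fin k)) | IsNonCrossing π} =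
      noncrossingMeeting (univ : Finset (Fin k)) univ := by
    ext π
    have hmeet : ∀ B ∈ π.parts, ¬ Disjoint B univ := fun B hB => by
      simpa [disjoint_iff_inter_eq_empty] using π.ne_empty hB
    rw [mem_coe, mem_noncrossingMeeting]
    exact (and_iff_left hmeet).symm
  have hweight := meetingWeight_eq_coeff_stackSeries κ (subset_univ (univ : Finset (Fin k)))
    (by simp)
  rw [hset, finsum_mem_coe_finset]
  simpa [meetingWeight] using hweight

end StackSeries

section NilpotentEval

open PowerSeries

variable {R A : Type*} [CommRing R] [Ring A] [Algebra R A] {D : A} {t : ℕ}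

theorem aeval_trunc_coe (hD : D ^ t = 0) (p : Polynomial R) :
    Polynomial.aeval D (trunc t (p : R⟦X⟧)) = Polynomial.aeval D p := by
  obtain ⟨r, hr⟩ : Polynomial.X ^ t ∣ p - trunc t (p : R⟦X⟧) := by
    rw [Polynomial.X_pow_dvd_iff]
    intro d hd
    simp [coeff_trunc, hd]
  have haeval := congrArg (Polynomial.aeval D) hr
  rw [map_sub, map_mul, map_pow, Polynomial.aeval_X, hD, zero_mul, sub_eq_zero] at haeval
  exact haeval.symm

/-- Substitution of an element `D` with `D ^ t = 0` into power series. -/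
noncomputable def nilpotentEval (hD : D ^ t = 0) : R⟦X⟧ →ₐ[R] A :=
  AlgHom.ofLinearMap ((Polynomial.aeval D).toLinearMap ∘ₗ trunc t)
    (by simpa using aeval_trunc_coe hD (1 : Polynomial R))
    (fun f g => by
      have h := aeval_trunc_coe hD (trunc t f * trunc t g)
      rwa [Polynomial.coe_mul, trunc_trunc_mul_trunc, map_mul (Polynomial.aeval D)] at h)

theorem nilpotentEval_apply (hD : D ^ t = 0) (f : R⟦X⟧) :
    nilpotentEval hD f = ∑ k ∈ Finset.range t, coeff k f • D ^ k := by
  change Polynomial.aeval D (trunc t f) = _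
  simp [Polynomial.aeval_def, eval₂_trunc_eq_sum_range, Algebra.smul_def]

theorem nilpotentEval_X (hD : D ^ t = 0) : nilpotentEval hD (X : R⟦X⟧) = D := by
  have h := aeval_trunc_coe hD (Polynomial.X : Polynomial R)
  rwa [Polynomial.coe_X, Polynomial.aeval_X] at h

theorem nilpotentEval_X_mul_pow (hD : D ^ t = 0) (f : R⟦X⟧) :
    nilpotentEval hD ((X * f) ^ t) = 0 := by
  rw [mul_pow, map_mul, map_pow, nilpotentEval_X, hD, zero_mul]

end NilpotentEval

section Resolvent

open Finset PowerSeries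

variable {R A : Type*} [CommRing R] [Ring A] [Algebra R A] {D : A} {t : ℕ} {κ : ℕ → R} {v : R⟦X⟧}

theorem sum_constantCoeff_stackSeries_smul (hv : (1 + X * cumulantSeries κ) * v = 1) (j t : ℕ) :
    ∑ n ∈ range t, constantCoeff (stackSeries κ (n + j)) • ((X * v) ^ n * v) =
      stackSeries κ j - (X * v) ^ t * stackSeries κ (t + j) := by
  have hstep (n : ℕ) : constantCoeff (stackSeries κ (n + j)) • ((X * v) ^ n * v) =
      (X * v) ^ n * stackSeries κ (n + j) -
        (X * v) ^ (n + 1) * stackSeries κ (n + 1 + j) := by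
    have hrec := one_add_X_mul_cumulantSeries_mul_stackSeries κ (n + j)
    rw [smul_eq_C_mul, Nat.add_right_comm n 1 j]
    linear_combination (X * v) ^ n * (stackSeries κ (n + j) * hv - v * hrec)
  rw [sum_congr rfl fun n _ => hstep n,
    sum_range_sub' (fun n => (X * v) ^ n * stackSeries κ (n + j))]
  simp

theorem sum_constantCoeff_stackSeries_smul_nilpotentEval (hD : D ^ t = 0)
    (hv : (1 + X * cumulantSeries κ) * v = 1) (j : ℕ) :
    ∑ n ∈ range t, constantCoeff (stackSeries κ (n + j)) • nilpotentEval hD ((X * v) ^ n * v) =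
      nilpotentEval hD (stackSeries κ j) := by
  have h := congrArg (nilpotentEval hD) (sum_constantCoeff_stackSeries_smul hv j t)
  simpa only [map_sum, map_smul, map_sub, map_mul (nilpotentEval hD) ((X * v) ^ t),
    nilpotentEval_X_mul_pow, zero_mul, sub_zero] using h

theorem sum_pow_smul_nilpotentEval_mul (hD : D ^ t = 0)
    (hv : (1 + X * cumulantSeries κ) * v = 1) (x : R) :
    (∑ n ∈ range t, x ^ n • nilpotentEval hD ((X * v) ^ n * v)) *
      (1 - x • D + nilpotentEval hD (cumulantSeries κ) * D) = 1 := by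
  have hresolvent : (∑ n ∈ range t, x ^ n • ((X * v) ^ n * v)) *
      (1 - x • X + cumulantSeries κ * X) = 1 - x ^ t • (X * v) ^ t := by
    have hgeom := geom_sum_mul_neg (x • (X * v)) t
    have hsum : ∑ n ∈ range t, x ^ n • ((X * v) ^ n * v) =
        (∑ n ∈ range t, (x • (X * v)) ^ n) * v := by
      simp only [sum_mul, smul_pow, smul_mul_assoc]
    rw [← smul_pow, ← hgeom, hsum]
    simp only [smul_eq_C_mul]
    linear_combination (∑ n ∈ range t, (C x * (X * v)) ^ n) * hv
  have h := congrArg (nilpotentEval hD) hresolvent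
  simpa only [map_mul (nilpotentEval hD) (∑ n ∈ range t, x ^ n • ((X * v) ^ n * v)), map_sum,
    map_smul, map_add, map_sub, map_one, map_mul (nilpotentEval hD) (cumulantSeries κ),
    nilpotentEval_X, nilpotentEval_X_mul_pow, smul_zero, sub_zero] using h

end Resolvent

section Matrix

open Matrix

theorem pow_card_eq_zero_of_strictLower {ι R : Type*} [Fintype ι] [LinearOrder ι] [CommRing R]
    {D : Matrix ι ι R} (hD : ∀ i j, i ≤ j → D i j = 0) : D ^ Fintype.card ι = 0 := by
  have hupper : Dᵀ.IsUpperTriangular := fun i j hij => hD j i hij.le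
  have hcharpoly : D.charpoly = Polynomial.X ^ Fintype.card ι := by
    rw [← charpoly_transpose, charpoly_of_isUpperTriangular Dᵀ hupper]
    simp [hD]
  simpa [hcharpoly] using D.aeval_self_charpoly

theorem integral_sum_pow_smul_mul_apply {ι : Type*} [Fintype ι] [DecidableEq ι]
    {μ : Measure ℝ} {t : ℕ}
    (hint : ∀ k ≤ t, Integrable (fun x => x ^ k) μ) (N : ℕ → Matrix ι ι ℝ) (B : Matrix ι ι ℝ)
    (i j : ι) :
    ∫ x, ((∑ n ∈ Finset.range t, x ^ n • N n) * (x • (1 : Matrix ι ι ℝ) - B)) i j ∂μ =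
      (∑ n ∈ Finset.range t, (∫ x, x ^ (n + 1) ∂μ) • N n -
        (∑ n ∈ Finset.range t, (∫ x, x ^ n ∂μ) • N n) * B) i j := by
  have hentry (x : ℝ) : ((∑ n ∈ Finset.range t, x ^ n • N n) * (x • (1 : Matrix ι ι ℝ) - B)) i j =
      ∑ n ∈ Finset.range t, (x ^ (n + 1) * N n i j - x ^ n * (N n * B) i j) := by
    simp [mul_sub, Finset.sum_mul, Matrix.sum_apply, pow_succ', mul_assoc, Finset.mul_sum]
  have hsucc : ∀ n ∈ Finset.range t, Integrable (fun x => x ^ (n + 1) * N n i j) μ :=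
    fun n hn => (hint (n + 1) (Finset.mem_range.1 hn)).mul_const _
  have hpow : ∀ n ∈ Finset.range t, Integrable (fun x => x ^ n * (N n * B) i j) μ :=
    fun n hn => (hint n (Finset.mem_range.1 hn).le).mul_const _
  simp_rw [hentry]
  rw [integral_finsetSum (Finset.range t) fun n hn => (hsucc n hn).sub' (hpow n hn),
    Finset.sum_congr rfl fun n hn => integral_sub (hsucc n hn) (hpow n hn)]
  simp [integral_mul_const, Finset.sum_mul, Matrix.sum_apply]

end Matrix

theorem integrable_pow_of_le {μ : Measure ℝ} [IsFiniteMeasure μ] {t k : ℕ}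
    (ht : Integrable (fun x => x ^ t) μ) (hk : k ≤ t) : Integrable (fun x => x ^ k) μ := by
  have hnorm : Integrable (fun x : ℝ => ‖x‖ ^ k) μ :=
    integrable_norm_pow_of_le aestronglyMeasurable_id hk (by simpa using ht.norm)
  rw [← integrable_norm_iff (by fun_prop)]
  simpa using hnorm

theorem integrable_pow_of_isCompact {μ : Measure ℝ} [IsFiniteMeasure μ] {K : Set ℝ}
    (hK : IsCompact K) (hKc : μ Kᶜ = 0) (k : ℕ) : Integrable (fun x => x ^ k) μ := by
  have hint : IntegrableOn (fun x : ℝ => x ^ k) K μ :=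
    (continuous_pow k).continuousOn.integrableOn_compact hK
  rwa [IntegrableOn, Measure.restrict_eq_self_of_ae_mem hKc] at hint

theorem stmt10_general {ι : Type*} [Fintype ι] [DecidableEq ι] (μ : Measure ℝ)
    [IsProbabilityMeasure μ] (κ : ℕ → ℝ) (t : ℕ) (ht : Integrable (fun x => x ^ t) μ)
    (hκ : ∀ k : ℕ, 1 ≤ k → k ≤ t →
      (∫ x, x ^ k ∂μ) =
        ∑ᶠ π ∈ {π : Finpartition (Finset.univ : Finset (Fin k)) | IsNonCrossing π},
          ∏ B ∈ π.parts, κ B.card)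
    (D : Matrix ι ι ℝ) (hD : D ^ t = 0) (i j : ι) :
    (∫ x, (((1 : Matrix ι ι ℝ) - x • D + (∑ k ∈ Finset.range t, κ (k + 1) • D ^ k) * D)⁻¹ *
        (x • (1 : Matrix ι ι ℝ) - ∑ k ∈ Finset.range t, κ (k + 1) • D ^ k)) i j ∂μ) = 0 := by
  have hmoment : ∀ k ≤ t, ∫ x, x ^ k ∂μ = PowerSeries.constantCoeff (stackSeries κ k) := by
    rintro (_ | k) hk
    · simp [stackSeries]
    · rw [hκ _ k.succ_pos hk, finsum_isNonCrossing_eq_constantCoeff_stackSeries]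
  have hB : ∑ k ∈ Finset.range t, κ (k + 1) • D ^ k = nilpotentEval hD (cumulantSeries κ) := by
    simp [nilpotentEval_apply, cumulantSeries]
  obtain ⟨v, hv⟩ : ∃ v, (1 + PowerSeries.X * cumulantSeries κ) * v = 1 :=
    ⟨_, PowerSeries.mul_invOfUnit _ 1 (by simp)⟩
  simp_rw [hB, Matrix.inv_eq_left_inv (sum_pow_smul_nilpotentEval_mul hD hv _)]
  rw [integral_sum_pow_smul_mul_apply fun k hk => integrable_pow_of_le ht hk]
  have hsucc := sum_constantCoeff_stackSeries_smul_nilpotentEval hD hv 1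
  have hzero := sum_constantCoeff_stackSeries_smul_nilpotentEval hD hv 0
  simp only [add_zero] at hzero
  rw [Finset.sum_congr rfl fun n hn => by rw [hmoment (n + 1) (Finset.mem_range.1 hn)], hsucc,
    Finset.sum_congr rfl fun n hn => by rw [hmoment n (Finset.mem_range.1 hn).le], hzero,
    stackSeries_one, stackSeries, map_one, one_mul, sub_self, Matrix.zero_apply]

theorem stmt10 (μ : Measure ℝ) [IsProbabilityMeasure μ]
    (K : Set ℝ) (hK : IsCompact K) (hKc : μ Kᶜ = 0)
    (κ : ℕ → ℝ)
    (hκ : ∀ k : ℕ, 1 ≤ k →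
      (∫ x, x ^ k ∂μ) =
        ∑ᶠ π ∈ {π : Finpartition (Finset.univ : Finset (Fin k)) | IsNonCrossing π},
          ∏ B ∈ π.parts, κ B.card) :
    ∀ t : ℕ, 1 ≤ t → ∀ D : Matrix (Fin t) (Fin t) ℝ,
      (∀ i j : Fin t, i ≤ j → D i j = 0) →
      ∀ i j : Fin t,
        (∫ x, (((1 : Matrix (Fin t) (Fin t) ℝ) - x • D +
              (∑ k ∈ Finset.range t, κ (k + 1) • D ^ k) * D)⁻¹ *
            (x • (1 : Matrix (Fin t) (Fin t) ℝ) -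
              ∑ k ∈ Finset.range t, κ (k + 1) • D ^ k)) i j ∂μ) = 0 := fun t _ D hD =>
  stmt10_general μ κ t (integrable_pow_of_isCompact hK hKc t) (fun k hk _ => hκ k hk) D
    (by simpa using pow_card_eq_zero_of_strictLower hD)
end

section
/- Let μ be a compactly supported Borel probability measure on ℝ and let (Q_n)_{n≥0}, (q_n)_{n≥0} be defined from μ as in the context. Then for all integers I, J ≥ 1 the polynomial identity Q_I · Q_J = Q_{I+J} + Σ_{k=1}^{I} Σ_{j=1}^{J} q_{k+j} · Q_{I−k} · Q_{J−j} holds in ℝ[λ]. -/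
open MeasureTheory

/-!
Write `S I J` for the double sum. Removing the first row (`k = 1`) of `S (I + 1) J` leaves the same
sum as removing the first column (`j = 1`) of `S I (J + 1)`, and the recurrence evaluates both
removed parts. Hence `Q I * Q J - S I J` depends only on `I + J`, and at `I = 0` it equals `Q J`.
-/

theorem sum_Icc_succ_eq_add_sum_succ {M : Type*} [AddCommMonoid M] (f : ℕ → M) {m n : ℕ}
    (hmn : m ≤ n + 1) :
    ∑ i ∈ Finset.Icc m (n + 1), f i = f m + ∑ i ∈ Finset.Icc m n, f (i + 1) := by
  rw [← Finset.add_sum_Ioc_eq_sum_Icc hmn, ← Finset.Icc_add_one_left_eq_Ioc,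
    ← Finset.map_add_right_Icc, Finset.sum_map]
  rfl

section HankelSum

variable {R : Type*} [CommSemiring R]

/-- The double convolution of two sequences `a`, `b` against the Hankel matrix `q (k + j)`, with
both indices starting at `1`; the sum in the product formula is the case `a = b = Q`. -/
def hankelSum (q a b : ℕ → R) (m n : ℕ) : R :=
  ∑ k ∈ Finset.Icc 1 m, ∑ j ∈ Finset.Icc 1 n, q (k + j) * (a (m - k) * b (n - j))

theorem hankelSum_comm (q a b : ℕ → R) (m n : ℕ) :
    hankelSum q a b m n = hankelSum q b a n m := by
  unfold hankelSum
  rw [Finset.sum_comm]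
  refine Finset.sum_congr rfl fun j _ => Finset.sum_congr rfl fun k _ => ?_
  rw [add_comm k j, mul_comm (a (m - k))]

theorem hankelSum_zero_left (q a b : ℕ → R) (n : ℕ) : hankelSum q a b 0 n = 0 := by
  simp [hankelSum]

theorem hankelSum_succ_left (q a b : ℕ → R) (m n : ℕ) :
    hankelSum q a b (m + 1) n =
      a m * ∑ j ∈ Finset.Icc 1 n, q (j + 1) * b (n - j) +
        hankelSum (fun i => q (i + 1)) a b m n := by
  unfold hankelSum
  rw [sum_Icc_succ_eq_add_sum_succ _ (Nat.le_add_left 1 m), Finset.mul_sum]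
  simp only [Nat.add_sub_cancel, Nat.add_sub_add_right, add_comm 1, add_right_comm _ 1,
    mul_left_comm (a m)]

theorem hankelSum_succ_right (q a b : ℕ → R) (m n : ℕ) :
    hankelSum q a b m (n + 1) =
      b n * ∑ k ∈ Finset.Icc 1 m, q (k + 1) * a (m - k) +
        hankelSum (fun i => q (i + 1)) a b m n := by
  rw [hankelSum_comm, hankelSum_succ_left, hankelSum_comm _ b]

end HankelSum

section Recurrence

variable {R : Type*} [CommRing R] {x : R} {Q q : ℕ → R}

theorem sum_succ_mul_eq_of_recurrence
    (hQrec : ∀ n : ℕ, 1 ≤ n → Q n = x * Q (n - 1) - ∑ i ∈ Finset.Icc 1 n, q i * Q (n - i))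
    (n : ℕ) :
    ∑ i ∈ Finset.Icc 1 n, q (i + 1) * Q (n - i) = x * Q n - Q (n + 1) - q 1 * Q n := by
  have hn : 1 ≤ n + 1 := Nat.le_add_left 1 n
  have hrec := hQrec (n + 1) hn
  simp only [sum_Icc_succ_eq_add_sum_succ _ hn, Nat.add_sub_cancel, Nat.add_sub_add_right] at hrec
  linear_combination hrec

theorem mul_sub_hankelSum_succ_of_recurrence
    (hQrec : ∀ n : ℕ, 1 ≤ n → Q n = x * Q (n - 1) - ∑ i ∈ Finset.Icc 1 n, q i * Q (n - i))
    (m n : ℕ) :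
    Q (m + 1) * Q n - hankelSum q Q Q (m + 1) n =
      Q m * Q (n + 1) - hankelSum q Q Q m (n + 1) := by
  rw [hankelSum_succ_left, hankelSum_succ_right, sum_succ_mul_eq_of_recurrence hQrec,
    sum_succ_mul_eq_of_recurrence hQrec]
  ring

theorem mul_sub_hankelSum_of_recurrence
    (hQrec : ∀ n : ℕ, 1 ≤ n → Q n = x * Q (n - 1) - ∑ i ∈ Finset.Icc 1 n, q i * Q (n - i))
    (m n : ℕ) : Q m * Q n - hankelSum q Q Q m n = Q 0 * Q (m + n) := by
  induction m generalizing n with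
  | zero => rw [hankelSum_zero_left, sub_zero, zero_add]
  | succ m ih =>
    rw [mul_sub_hankelSum_succ_of_recurrence hQrec, ih, Nat.succ_add_eq_add_succ]

theorem stmt12_general (hQ0 : Q 0 = 1)
    (hQrec : ∀ n : ℕ, 1 ≤ n → Q n = x * Q (n - 1) - ∑ i ∈ Finset.Icc 1 n, q i * Q (n - i))
    (I J : ℕ) :
    Q I * Q J = Q (I + J) + ∑ k ∈ Finset.Icc 1 I, ∑ j ∈ Finset.Icc 1 J,
      q (k + j) * (Q (I - k) * Q (J - j)) := by
  have hdiff := mul_sub_hankelSum_of_recurrence hQrec I J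
  rw [hQ0, one_mul] at hdiff
  exact sub_eq_iff_eq_add.mp hdiff

end Recurrence

theorem stmt12 (μ : Measure ℝ) [IsProbabilityMeasure μ]
    (K : Set ℝ) (hK : IsCompact K) (hKc : μ Kᶜ = 0)
    (Q : ℕ → Polynomial ℝ) (q : ℕ → ℝ)
    (hQ0 : Q 0 = 1) (hq0 : q 0 = 1)
    (hq : ∀ n : ℕ, 1 ≤ n → q n = ∫ x, x * (Q (n - 1)).eval x ∂μ)
    (hQrec : ∀ n : ℕ, 1 ≤ n →
      Q n = Polynomial.X * Q (n - 1) - ∑ i ∈ Finset.Icc 1 n, Polynomial.C (q i) * Q (n - i)) :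
    ∀ I J : ℕ, 1 ≤ I → 1 ≤ J →
      Q I * Q J =
        Q (I + J) + ∑ k ∈ Finset.Icc 1 I, ∑ j ∈ Finset.Icc 1 J,
          Polynomial.C (q (k + j)) * (Q (I - k) * Q (J - j)) := by
  intro I J _ _
  exact stmt12_general (q := fun n => Polynomial.C (q n)) hQ0 hQrec I J
end

section
/- Let μ be a compactly supported Borel probability measure on ℝ and let (Q_n)_{n≥0}, (q_n)_{n≥0} be defined from μ as in the context. Fix integers N ≥ 1 and t ≥ 1. Let W be an arbitrary real N×N matrix, let (u_s)_{s=1}^{t} be vectors in ℝ^N, let (d_{s,i})_{1≤i≤s≤t−1} be real numbers, and let D ∈ ℝ^{t×t} be the strictly lower triangular matrix with entries D_{s,i} = d_{s−1,i} for i < s. Set B := Σ_{i=1}^{t} q_i·D^{i−1} (with D^0 := I_t), with entries b_{s,i} := B_{s,i}, and define r_s := W·u_s − Σ_{i=1}^{s} b_{s,i}·u_i for 1 ≤ s ≤ t, ū_1 := u_1, and ū_s := u_s − Σ_{i=1}^{s−1} d_{s−1,i}·r_i for 2 ≤ s ≤ t. Then for every 1 ≤ s ≤ t, r_s = Σ_{i=1}^{s}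 P_{s,i}(W)·ū_i, where P_{s,i}(λ) denotes the (s,i) entry of the matrix Σ_{j=1}^{t} Q_j(λ)·D^{j−1} and P_{s,i}(W) its evaluation at the matrix W. -/
open MeasureTheory

/-!
The recursion for `Q` is an identity of generating functions. With `Q(z) = ∑ Q_n zⁿ`,
`P(z) = ∑ Q_{n+1} zⁿ` and `q(z) = ∑ q_{n+1} zⁿ` it reads

  `P = Q (λ - q)`   and   `Q = 1 + P z`.

Since `D` is nilpotent, both identities can be evaluated at `z = D`. Let matrices of polynomials
act on tuples of vectors, with `λ` acting as `W`. Then `r = (λ - q(D)) u` and `ū = u - D r`, so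
`P(D) ū = P(D) u - (Q(D) - 1) r = P(D) u - Q(D) (λ - q(D)) u + r = r`.
-/

open Polynomial Finset
open scoped PowerSeries Matrix.Module

lemma sum_Icc_one_succ_eq_sum_antidiagonal {M : Type*} [AddCommMonoid M] (f : ℕ → ℕ → M)
    (n : ℕ) :
    ∑ i ∈ Icc 1 (n + 1), f i (n + 1 - i) = ∑ p ∈ antidiagonal n, f (p.2 + 1) p.1 := by
  rw [← Ico_add_one_right_eq_Icc, sum_Ico_eq_sum_range, ← Nat.sum_antidiagonal_swap,
    Nat.sum_antidiagonal_eq_sum_range_succ_mk]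
  simp [add_comm 1]

section NilpotentEvaluation

variable {A S : Type*} [CommRing A] [Ring S] [Algebra A S] {n : ℕ} {E : S}

lemma aeval_trunc_coe_of_pow_eq_zero (hE : E ^ n = 0) (p : A[X]) :
    aeval E (PowerSeries.trunc n (p : A⟦X⟧)) = aeval E p := by
  have hdvd : (X : A[X]) ^ n ∣ p - PowerSeries.trunc n (p : A⟦X⟧) := by
    rw [Polynomial.X_pow_dvd_iff]
    intro d hd
    simp [PowerSeries.coeff_trunc, hd]
  obtain ⟨g, hg⟩ := hdvd
  have hzero : aeval E (p - PowerSeries.trunc n (p : A⟦X⟧)) = 0 := by simp [hg, hE]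
  rw [map_sub, sub_eq_zero] at hzero
  exact hzero.symm

/-- Evaluation of formal power series at an element `E` with `E ^ n = 0`, as an algebra
homomorphism. It is encoded as evaluation of the truncation below degree `n`, so that no topology
is needed. -/
noncomputable def evalOfPowEqZero (hE : E ^ n = 0) : A⟦X⟧ →ₐ[A] S :=
  AlgHom.ofLinearMap ((aeval E).toLinearMap ∘ₗ PowerSeries.trunc n)
    (by simpa using aeval_trunc_coe_of_pow_eq_zero hE (1 : A[X]))
    (fun φ ψ => by
      have h := aeval_trunc_coe_of_pow_eq_zero hE (PowerSeries.trunc n φ * PowerSeries.trunc n ψ)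
      rwa [Polynomial.coe_mul, PowerSeries.trunc_trunc_mul_trunc, map_mul (aeval E)] at h)

lemma evalOfPowEqZero_apply (hE : E ^ n = 0) (φ : A⟦X⟧) :
    evalOfPowEqZero hE φ = aeval E (PowerSeries.trunc n φ) :=
  rfl

lemma evalOfPowEqZero_mk (hE : E ^ n = 0) (a : ℕ → A) :
    evalOfPowEqZero hE (PowerSeries.mk a) = ∑ i ∈ range n, a i • E ^ i := by
  simp [evalOfPowEqZero_apply, aeval_def, PowerSeries.eval₂_trunc_eq_sum_range, Algebra.smul_def]

lemma evalOfPowEqZero_X (hE : E ^ n = 0) :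
    evalOfPowEqZero hE (PowerSeries.X : A⟦X⟧) = E := by
  simpa [evalOfPowEqZero_apply] using aeval_trunc_coe_of_pow_eq_zero hE (X : A[X])

end NilpotentEvaluation

section ConvolutionRecursion

lemma mk_eq_one_add_mk_succ_mul_X {R : Type*} [Semiring R] {a : ℕ → R} (ha : a 0 = 1) :
    PowerSeries.mk a = 1 + PowerSeries.mk (fun n => a (n + 1)) * PowerSeries.X := by
  simpa [ha, add_comm] using PowerSeries.eq_shift_mul_X_add_const (PowerSeries.mk a)

variable {A : Type*} [CommRing A] {x : A} {Q c : ℕ → A}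

lemma mk_succ_eq_mk_mul_sub
    (hQ : ∀ n, Q (n + 1) = x * Q n - ∑ p ∈ antidiagonal n, Q p.1 * c p.2) :
    PowerSeries.mk (fun n => Q (n + 1)) =
      PowerSeries.mk Q * (algebraMap A A⟦X⟧ x - PowerSeries.mk c) := by
  ext n
  rw [mul_sub, mul_comm _ (algebraMap A A⟦X⟧ x), ← Algebra.smul_def]
  simp [PowerSeries.coeff_mul, hQ]

lemma eq_sum_smul_pow_smul_sub_smul {S V : Type*} [Ring S] [Algebra A S] [AddCommGroup V]
    [Module S V] {n : ℕ} {E : S} (hE : E ^ n = 0) (hQ0 : Q 0 = 1)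
    (hQ : ∀ n, Q (n + 1) = x * Q n - ∑ p ∈ antidiagonal n, Q p.1 * c p.2) {r u : V}
    (hr : r = (algebraMap A S x - ∑ i ∈ range n, c i • E ^ i) • u) :
    r = (∑ j ∈ range n, Q (j + 1) • E ^ j) • (u - E • r) := by
  have hshift := congrArg (evalOfPowEqZero hE) (mk_eq_one_add_mk_succ_mul_X hQ0)
  have hrec := congrArg (evalOfPowEqZero hE) (mk_succ_eq_mk_mul_sub hQ)
  simp only [map_add, map_sub, map_mul, map_one, AlgHom.commutes, evalOfPowEqZero_mk,
    evalOfPowEqZero_X] at hshift hrec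
  set G := ∑ j ∈ range n, Q j • E ^ j
  set P := ∑ j ∈ range n, Q (j + 1) • E ^ j
  have hGr : G • r = P • u := by rw [hrec, mul_smul, ← hr]
  calc r = G • r - (P * E) • r := by rw [hshift, add_smul, one_smul, add_sub_cancel_right]
    _ = P • (u - E • r) := by rw [hGr, mul_smul, smul_sub]

end ConvolutionRecursion

section LowerTriangular

variable {ι A M : Type*} [Fintype ι] [LinearOrder ι]

lemma pow_card_eq_zero_of_strictlyLowerTriangular [CommRing A] {D : Matrix ι ι A}
    (hD : ∀ i j, i ≤ j → D i j = 0) :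
    D ^ Fintype.card ι = 0 := by
  have hupper : D.transpose.IsUpperTriangular := fun i j hij => hD j i hij.le
  have hcharpoly : D.charpoly = X ^ Fintype.card ι := by
    rw [← Matrix.charpoly_transpose, Matrix.charpoly_of_isUpperTriangular _ hupper]
    simp [hD _ _ le_rfl]
  simpa [hcharpoly] using D.aeval_self_charpoly

lemma isLowerTriangular_sum_smul_pow [CommSemiring A] {D : Matrix ι ι A}
    (hD : D.IsLowerTriangular) (a : ℕ → A) (n : ℕ) :
    (∑ j ∈ range n, a j • D ^ j).IsLowerTriangular :=
  sum_mem (S := Matrix.blockTriangularSubalgebra A A OrderDual.toDual) fun j _ =>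
    Subalgebra.smul_mem _ (hD.pow j) (a j)

variable [AddCommGroup M]

lemma sum_filter_le_smul [Ring A] [Module A M] {D : Matrix ι ι A} (hD : D.IsLowerTriangular)
    (v : ι → M) (s : ι) :
    ∑ i with i ≤ s, D s i • v i = (D • v) s := by
  refine sum_filter_of_ne fun i _ hne => ?_
  contrapose! hne
  rw [hD hne, zero_smul]

lemma sum_filter_lt_smul [Ring A] [Module A M] {D : Matrix ι ι A}
    (hD : ∀ i j, i ≤ j → D i j = 0) (v : ι → M) (s : ι) :
    ∑ i with i < s, D s i • v i = (D • v) s := by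
  refine sum_filter_of_ne fun i _ hne => ?_
  contrapose! hne
  rw [hD s i hne, zero_smul]

theorem eq_sum_filter_le_smul_of_convolution_recursion [CommRing A] [Module A M]
    {D : Matrix ι ι A} {x : A} {Q c : ℕ → A} (hQ0 : Q 0 = 1)
    (hQ : ∀ n, Q (n + 1) = x * Q n - ∑ p ∈ antidiagonal n, Q p.1 * c p.2)
    (hD : ∀ i j, i ≤ j → D i j = 0) {u r ubar : ι → M}
    (hr : ∀ s, r s = x • u s -
      ∑ i with i ≤ s, (∑ j ∈ range (Fintype.card ι), c j • D ^ j) s i • u i)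
    (hubar : ∀ s, ubar s = u s - ∑ i with i < s, D s i • r i) (s : ι) :
    r s = ∑ i with i ≤ s,
      (∑ j ∈ range (Fintype.card ι), Q (j + 1) • D ^ j) s i • ubar i := by
  have hlower : D.IsLowerTriangular := fun i j hij => hD i j hij.le
  simp only [sum_filter_le_smul (isLowerTriangular_sum_smul_pow hlower _ _)] at hr ⊢
  simp only [sum_filter_lt_smul hD] at hubar
  have hr' : r =
      (algebraMap A (Matrix ι ι A) x - ∑ j ∈ range (Fintype.card ι), c j • D ^ j) • u := by
    funext s
    rw [sub_smul, Pi.sub_apply, algebraMap_smul, Pi.smul_apply, hr]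
  have hubar' : ubar = u - D • r := funext hubar
  rw [hubar']
  exact congrFun
    (eq_sum_smul_pow_smul_sub_smul (pow_card_eq_zero_of_strictlyLowerTriangular hD) hQ0 hQ hr') s

end LowerTriangular

lemma aeval_toLinAlgEquiv'_apply {n R : Type*} [Fintype n] [DecidableEq n]
    [CommSemiring R] (W : Matrix n n R) (p : R[X]) (v : n → R) :
    aeval (Matrix.toLinAlgEquiv' W) p v = (aeval W p).mulVec v := by
  rw [aeval_algHom_apply, Matrix.toLinAlgEquiv'_apply]

theorem stmt14_general {ι R M : Type*} [Fintype ι] [LinearOrder ι] [CommRing R] [AddCommGroup M]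
    [Module R M] (Q : ℕ → R[X]) (q : ℕ → R) (hQ0 : Q 0 = 1)
    (hQrec : ∀ n, 1 ≤ n → Q n = X * Q (n - 1) - ∑ i ∈ Icc 1 n, C (q i) * Q (n - i))
    (W : Module.End R M) (u r ubar : ι → M) (D : Matrix ι ι R)
    (hD : ∀ i j, i ≤ j → D i j = 0) (B : Matrix ι ι R)
    (hB : B = ∑ i ∈ range (Fintype.card ι), q (i + 1) • D ^ i)
    (hr : ∀ s, r s = W (u s) - ∑ i with i ≤ s, B s i • u i)
    (hubar : ∀ s, ubar s = u s - ∑ i with i < s, D s i • r i) (s : ι) :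
    r s = ∑ i with i ≤ s,
      aeval W ((∑ j ∈ range (Fintype.card ι), Q (j + 1) • (D ^ j).map C) s i)
        (ubar i) := by
  let _ : Module R[X] M := Module.compHom M (aeval W).toRingHom
  have smul_eq (p : R[X]) (m : M) : p • m = aeval W p m := rfl
  have hQ (n : ℕ) : Q (n + 1) = X * Q n -
      ∑ p ∈ antidiagonal n, Q p.1 * C (q (p.2 + 1)) := by
    simp only [hQrec (n + 1) n.succ_pos, Nat.add_sub_cancel, mul_comm (Q _),
      sum_Icc_one_succ_eq_sum_antidiagonal fun i j => C (q i) * Q j]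
  have hmap (j : ℕ) : (D ^ j).map C = D.map C ^ j := Matrix.map_pow (f := C) D j
  have hBmap (s i : ι) : C (B s i) = (∑ j ∈ range (Fintype.card ι),
      C (q (j + 1)) • D.map C ^ j) s i := by
    simp [hB, ← hmap, Matrix.sum_apply]
  simp only [hmap, ← smul_eq]
  refine eq_sum_filter_le_smul_of_convolution_recursion (x := X) (D := D.map C) (u := u)
    (c := fun j => C (q (j + 1))) hQ0 hQ (fun i j hij => ?_) (fun s => ?_) (fun s => ?_) s
  · rw [Matrix.map_apply, hD i j hij, map_zero]
  · simp only [← hBmap, smul_eq, aeval_X, aeval_C, Module.algebraMap_end_apply, hr s]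
  · simp only [Matrix.map_apply, smul_eq, aeval_C, Module.algebraMap_end_apply, hubar s]

theorem stmt14 (μ : Measure ℝ) [IsProbabilityMeasure μ]
    (K : Set ℝ) (hK : IsCompact K) (hKc : μ Kᶜ = 0)
    (Q : ℕ → Polynomial ℝ) (q : ℕ → ℝ)
    (hQ0 : Q 0 = 1) (hq0 : q 0 = 1)
    (hq : ∀ n : ℕ, 1 ≤ n → q n = ∫ x, x * (Q (n - 1)).eval x ∂μ)
    (hQrec : ∀ n : ℕ, 1 ≤ n →
      Q n = Polynomial.X * Q (n - 1) - ∑ i ∈ Finset.Icc 1 n, Polynomial.C (q i) * Q (n - i))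
    (N t : ℕ) (hN : 1 ≤ N) (ht : 1 ≤ t)
    (W : Matrix (Fin N) (Fin N) ℝ)
    (u r ubar : Fin t → Fin N → ℝ)
    (D : Matrix (Fin t) (Fin t) ℝ)
    (hD : ∀ i j : Fin t, i ≤ j → D i j = 0)
    (B : Matrix (Fin t) (Fin t) ℝ)
    (hB : B = ∑ i ∈ Finset.range t, q (i + 1) • D ^ i)
    (hr : ∀ s : Fin t,
      r s = W.mulVec (u s) - ∑ i ∈ Finset.univ.filter (fun i => i ≤ s), B s i • u i)
    (hubar : ∀ s : Fin t,
      ubar s = u s - ∑ i ∈ Finset.univ.filter (fun i => i < s), D s i • r i) :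
    ∀ s : Fin t,
      r s = ∑ i ∈ Finset.univ.filter (fun i => i ≤ s),
        (Polynomial.aeval W
          ((∑ j ∈ Finset.range t, Q (j + 1) • (D ^ j).map Polynomial.C) s i)).mulVec (ubar i) := by
  simpa only [Fintype.card_fin, aeval_toLinAlgEquiv'_apply] using
    stmt14_general Q q hQ0 hQrec (Matrix.toLinAlgEquiv' W) u r ubar D hD B (by simpa using hB)
      hr hubar
end
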